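/- Let Q be a hereditary graph class with Q̂ nonempty, and let r ≥ 1 be a natural number such that for every W ∈ Q̂ the randomness support graphon 1_{rand(W)} is K_{r+1}-free, while there exists W₀ ∈ Q̂ such that 1_{rand(W₀)} is not K_r-free. Then sup_{W∈Q̂} Ent(W) = 1 - 1/r; moreover there exists s ∈ {0,…,r} with W^{(r,s)} ∈ Q̂, and W^{(t,u)} ∉ Q̂ whenever t > r and 0 ≤ u ≤ t. -/

import Mathlib

open MeasureTheory Set Filter

noncomputable section

/-- A graphon: a symmetric measurable function `ℝ → ℝ → ℝ` with values in `[0,1]`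
(only its values on `[0,1]²` matter). -/
def IsGraphon (W : ℝ → ℝ → ℝ) : Prop :=
  (∀ x y, W x y = W y x) ∧ Measurable (Function.uncurry W) ∧
    ∀ x y, W x y ∈ Set.Icc (0 : ℝ) 1

/-- The cut norm `‖U‖_□`, the supremum over measurable `S, T ⊆ [0,1]` of
`|∫_{S×T} U|`. -/
def cutNorm (U : ℝ → ℝ → ℝ) : ℝ :=
  sSup { r : ℝ | ∃ S T : Set ℝ, MeasurableSet S ∧ MeasurableSet T ∧
    S ⊆ Set.Icc 0 1 ∧ T ⊆ Set.Icc 0 1 ∧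
    r = |∫ p in S ×ˢ T, U p.1 p.2| }

/-- `d_□(W₁, W₂) = ‖W₁ - W₂‖_□`. -/
def dCut (W₁ W₂ : ℝ → ℝ → ℝ) : ℝ := cutNorm (fun x y => W₁ x y - W₂ x y)

/-- A Lebesgue-measure-preserving map `[0,1] → [0,1]`. -/
def IsMPSelf (σ : ℝ → ℝ) : Prop :=
  MeasureTheory.MeasurePreserving σ
      (MeasureTheory.volume.restrict (Set.Icc (0:ℝ) 1))
      (MeasureTheory.volume.restrict (Set.Icc (0:ℝ) 1)) ∧
    Set.MapsTo σ (Set.Icc (0:ℝ) 1) (Set.Icc (0:ℝ) 1)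

/-- The cut distance `δ_□(W₁, W₂)`. -/
def deltaCut (W₁ W₂ : ℝ → ℝ → ℝ) : ℝ :=
  sInf { r : ℝ | ∃ σ₁ σ₂ : ℝ → ℝ, IsMPSelf σ₁ ∧ IsMPSelf σ₂ ∧
    r = cutNorm (fun x y => W₁ (σ₁ x) (σ₁ y) - W₂ (σ₂ x) (σ₂ y)) }

/-- The binary entropy function `h` (base-2 logarithm; `logb 2 0 = 0` by convention,
so `h 0 = h 1 = 0`). -/
def binEnt (x : ℝ) : ℝ := -x * Real.logb 2 x - (1 - x) * Real.logb 2 (1 - x)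

/-- `h̃ x = h (min x (1/2))`. -/
def htilde (x : ℝ) : ℝ := binEnt (min x (1/2))

/-- The entropy `Ent(W) = ∫₀¹∫₀¹ h(W(x,y)) dx dy` of a graphon. -/
def graphonEnt (W : ℝ → ℝ → ℝ) : ℝ :=
  ∫ x in Set.Icc (0:ℝ) 1, ∫ y in Set.Icc (0:ℝ) 1, binEnt (W x y)

open Classical in
/-- The graphon `W_G` of a simple graph `G` on `{1, …, n}` (vertices as `Fin n`,
vertex `i : Fin n` representing `i+1`): `W_G x y = 1` iff `⌈nx⌉⌈ny⌉ ∈ E(G)`. -/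
def graphonOfGraph {n : ℕ} (G : SimpleGraph (Fin n)) : ℝ → ℝ → ℝ := fun x y =>
  if ∃ i j : Fin n, G.Adj i j ∧ ⌈(n : ℝ) * x⌉ = ((i : ℕ) : ℤ) + 1 ∧
      ⌈(n : ℝ) * y⌉ = ((j : ℕ) : ℤ) + 1
  then 1 else 0

/-- A labelled graph class: a set of graphs on `{1,…,n}` for each `n`. -/
abbrev GraphClass := ∀ n : ℕ, Set (SimpleGraph (Fin n))

/-- A graph class is closed under relabelling by permutations. -/
def IsGraphClass (Q : GraphClass) : Prop :=
  ∀ (n : ℕ) (π : Equiv.Perm (Fin n)) (G : SimpleGraph (Fin n)),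
    G ∈ Q n → G.comap ⇑π ∈ Q n

/-- A hereditary graph class: a graph class closed under taking induced subgraphs
(relabelled by the order-preserving bijection). -/
def IsHereditary (Q : GraphClass) : Prop :=
  IsGraphClass Q ∧
    ∀ (m n : ℕ) (f : Fin m → Fin n), StrictMono f →
      ∀ G ∈ Q n, G.comap f ∈ Q m

/-- `Q̂`: the set of graphons which are limits (in cut distance) of sequences of graphs in
the class `Q` whose orders tend to infinity. -/
def limitSet (Q : GraphClass) : Set (ℝ → ℝ → ℝ) :=
  { W | IsGraphon W ∧
    ∃ (nk : ℕ → ℕ) (Gk : ∀ k, SimpleGraph (Fin (nk k))),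
      (∀ k, Gk k ∈ Q (nk k)) ∧ Filter.Tendsto nk Filter.atTop Filter.atTop ∧
      Filter.Tendsto (fun k => deltaCut (graphonOfGraph (Gk k)) W) Filter.atTop (nhds 0) }

/-- `C(n,2) = n(n-1)/2` as a real number. -/
def choose2 (n : ℕ) : ℝ := (n : ℝ) * ((n : ℝ) - 1) / 2

open Classical in
/-- The step function `E[W | P]` obtained by averaging `W` over the products of the
parts of the partition `P` of `[0,1]`. -/
def condExpPart {k : ℕ} (P : Fin k → Set ℝ) (W : ℝ → ℝ → ℝ) : ℝ → ℝ → ℝ := fun x y =>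
  ∑ i : Fin k, ∑ j : Fin k,
    if x ∈ P i ∧ y ∈ P j then ⨍ p in (P i) ×ˢ (P j), W p.1 p.2 else 0

/-- `W̄_n`: the step function of `W` for the partition of `[0,1]` into `n` consecutive
intervals of length `1/n`. -/
def barStep (n : ℕ) (W : ℝ → ℝ → ℝ) : ℝ → ℝ → ℝ :=
  condExpPart (fun i : Fin n => Set.Ioc (((i : ℕ) : ℝ)/n) ((((i : ℕ) : ℝ) + 1)/n)) W

/-- `N̂_□(n, δ; W)`: the number of graphs `G` on `{1,…,n}` with `d_□(W_G, W) ≤ δ`. -/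
def NhatCut (n : ℕ) (δ : ℝ) (W : ℝ → ℝ → ℝ) : ℕ :=
  Nat.card {G : SimpleGraph (Fin n) // dCut (graphonOfGraph G) W ≤ δ}

/-- `N_□(n, δ; W)`: the number of graphs `G` on `{1,…,n}` with `δ_□(W_G, W) ≤ δ`. -/
def NCut (n : ℕ) (δ : ℝ) (W : ℝ → ℝ → ℝ) : ℕ :=
  Nat.card {G : SimpleGraph (Fin n) // deltaCut (graphonOfGraph G) W ≤ δ}

open Classical in
/-- The induced density `p(F; W)` of a graph `F` on `{1,…,k}` in a graphon `W`. -/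
def inducedDensity {k : ℕ} (F : SimpleGraph (Fin k)) (W : ℝ → ℝ → ℝ) : ℝ :=
  ∫ x : Fin k → ℝ in Set.univ.pi (fun _ : Fin k => Set.Icc (0:ℝ) 1),
    ∏ i : Fin k, ∏ j : Fin k,
      if i < j then (if F.Adj i j then W (x i) (x j) else 1 - W (x i) (x j)) else 1

open Classical in
/-- The randomness support graphon `1_{rand(W)}` of `W`. -/
def randIndicator (W : ℝ → ℝ → ℝ) : ℝ → ℝ → ℝ := fun x y =>
  if 0 < W x y ∧ W x y < 1 then 1 else 0

/-- A kernel `U` is `K_r`-free if `∏_{i<j} U(x_i, x_j) = 0` for a.e. `x ∈ [0,1]^r`. -/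
def KFree (r : ℕ) (U : ℝ → ℝ → ℝ) : Prop :=
  ∀ᵐ x ∂(MeasureTheory.volume.restrict (Set.univ.pi fun _ : Fin r => Set.Icc (0:ℝ) 1)),
    (∏ i : Fin r, ∏ j : Fin r, if i < j then U (x i) (x j) else 1) = 0

open Classical in
/-- The graphon `W^{(r,s)}`: equal to `1/2` off the diagonal blocks, `1` on the first `s`
diagonal blocks `I_i × I_i`, and `0` on the remaining diagonal blocks. -/
def Wrs (r s : ℕ) : ℝ → ℝ → ℝ := fun x y =>
  if ∃ i j : Fin r, i ≠ j ∧ x ∈ Set.Ioc (((i:ℕ):ℝ)/r) ((((i:ℕ):ℝ)+1)/r) ∧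
      y ∈ Set.Ioc (((j:ℕ):ℝ)/r) ((((j:ℕ):ℝ)+1)/r)
  then 1/2
  else if ∃ i : Fin r, (i:ℕ) < s ∧ x ∈ Set.Ioc (((i:ℕ):ℝ)/r) ((((i:ℕ):ℝ)+1)/r) ∧
      y ∈ Set.Ioc (((i:ℕ):ℝ)/r) ((((i:ℕ):ℝ)+1)/r)
  then 1 else 0

/-- `E_r = ⋃_{i ≠ j} I_i × I_j` where `I_i`, `i = 1, …, r`, are the consecutive
intervals of length `1/r` in `[0,1]`. -/
def Er (r : ℕ) : Set (ℝ × ℝ) :=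
  ⋃ (i : Fin r) (j : Fin r) (_ : i ≠ j),
    (Set.Ioc (((i:ℕ):ℝ)/r) ((((i:ℕ):ℝ)+1)/r)) ×ˢ (Set.Ioc (((j:ℕ):ℝ)/r) ((((j:ℕ):ℝ)+1)/r))

/-- `R_r`: the set of graphons equal to `1/2` on `E_r` and `{0,1}`-valued elsewhere
on `[0,1]²`. -/
def Rset (r : ℕ) : Set (ℝ → ℝ → ℝ) :=
  { W | IsGraphon W ∧ (∀ p ∈ Er r, W p.1 p.2 = 1/2) ∧
      ∀ p ∈ ((Set.Icc (0:ℝ) 1) ×ˢ (Set.Icc (0:ℝ) 1)) \ Er r,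
        W p.1 p.2 = 0 ∨ W p.1 p.2 = 1 }

/-- A graphon is random-free if it is `{0,1}`-valued a.e. on `[0,1]²`. -/
def IsRandomFree (W : ℝ → ℝ → ℝ) : Prop :=
  ∀ᵐ p ∂(MeasureTheory.volume.restrict ((Set.Icc (0:ℝ) 1) ×ˢ (Set.Icc (0:ℝ) 1))),
    W (Prod.fst p) (Prod.snd p) = 0 ∨ W (Prod.fst p) (Prod.snd p) = 1


abbrev mu : Measure ℝ := volume.restrict (Icc (0:ℝ) 1)

instance mu_prob : IsProbabilityMeasure mu := ⟨by simp [mu]⟩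

abbrev piMu (ι : Type) [Fintype ι] : Measure (ι → ℝ) := Measure.pi fun _ : ι => mu

lemma kfree_iff (r : ℕ) (U : ℝ → ℝ → ℝ) : KFree r U ↔ ∀ᵐ x ∂(piMu (Fin r)),
    (∏ i : Fin r, ∏ j : Fin r, if i < j then U (x i) (x j) else 1) = 0 := by
  unfold KFree piMu mu
  rw [volume_pi, Measure.restrict_pi_pi]

lemma mp_comp {ι κ : Type} [Fintype ι] [Fintype κ] (f : ι → κ) (hf : Function.Injective f) :
    MeasurePreserving (fun x : κ → ℝ => fun i => x (f i)) (piMu κ) (piMu ι) := by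
  classical
  have hm : Measurable (fun x : κ → ℝ => fun i => x (f i)) := by fun_prop
  refine ⟨hm, ?_⟩
  symm
  apply Measure.pi_eq
  intro s hs
  rw [Measure.map_apply hm (MeasurableSet.univ_pi hs)]
  have : (fun x : κ → ℝ => fun i => x (f i)) ⁻¹' (univ.pi s) =
      univ.pi (fun k => if h : ∃ i, f i = k then s h.choose else univ) := by
    ext x
    simp only [mem_preimage, mem_univ_pi]
    constructor
    · intro h k
      split_ifs with hk
      · have := h hk.choose
        rwa [hk.choose_spec] at this
      · trivial
    · intro h i
      have h1 := h (f i)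
      have hk : ∃ i', f i' = f i := ⟨i, rfl⟩
      rw [dif_pos hk] at h1
      rwa [hf hk.choose_spec] at h1
  rw [this, Measure.pi_pi]
  rw [← Finset.prod_subset (Finset.subset_univ (Finset.univ.image f))]
  · rw [Finset.prod_image (fun a _ b _ h => hf h)]
    refine Finset.prod_congr rfl fun i _ => ?_
    have hk : ∃ i', f i' = f i := ⟨i, rfl⟩
    rw [dif_pos hk, hf hk.choose_spec]
  · intro k _ hk
    rw [dif_neg]
    · simp
    · simpa using hk

lemma mp_pair {ι : Type} [Fintype ι] {i j : ι} (hij : i ≠ j) :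
    MeasurePreserving (fun x : ι → ℝ => (x i, x j)) (piMu ι) (mu.prod mu) := by
  have h1 := mp_comp (ι := Fin 2) (κ := ι) ![i, j] (by
    intro a b; fin_cases a <;> fin_cases b <;> simp [hij, hij.symm])
  have h2 := measurePreserving_finTwoArrow (mu)
  exact h2.comp h1

lemma mp_resample {ι : Type} [Fintype ι] [DecidableEq ι] (i : ι) :
    MeasurePreserving (fun p : (ι → ℝ) × ℝ => Function.update p.1 i p.2)
      ((piMu ι).prod mu) (piMu ι) := by
  have hm : Measurable (fun p : (ι → ℝ) × ℝ => Function.update p.1 i p.2) := by fun_prop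
  refine ⟨hm, ?_⟩
  symm
  apply Measure.pi_eq
  intro s hs
  rw [Measure.map_apply hm (MeasurableSet.univ_pi hs)]
  have : (fun p : (ι → ℝ) × ℝ => Function.update p.1 i p.2) ⁻¹' (univ.pi s) =
      (univ.pi (Function.update s i univ)) ×ˢ (s i) := by
    ext ⟨x, t⟩
    simp only [mem_preimage, mem_univ_pi, mem_prod]
    constructor
    · intro h
      refine ⟨fun k => ?_, by simpa using h i⟩
      by_cases hk : k = i
      · subst hk; simp
      · simpa [hk] using h k
    · rintro ⟨h, h'⟩ k
      by_cases hk : k = i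
      · subst hk; simpa using h'
      · simpa [hk] using h k
  rw [this, Measure.prod_prod, Measure.pi_pi]
  rw [← Finset.mul_prod_erase Finset.univ _ (Finset.mem_univ i),
    ← Finset.mul_prod_erase Finset.univ (fun i => mu (s i)) (Finset.mem_univ i)]
  simp only [Function.update_self, measure_univ, one_mul]
  rw [mul_comm]
  congr 1
  refine Finset.prod_congr rfl fun k hk => ?_
  rw [Function.update_of_ne (Finset.ne_of_mem_erase hk)]

lemma mp_uncurry (α β : Type) [Fintype α] [Fintype β] :
    MeasurePreserving (fun x : α → β → ℝ => fun p : α × β => x p.1 p.2)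
      (Measure.pi fun _ : α => piMu β) (piMu (α × β)) := by
  have hm : Measurable (fun x : α → β → ℝ => fun p : α × β => x p.1 p.2) := by fun_prop
  refine ⟨hm, ?_⟩
  symm
  apply Measure.pi_eq
  intro s hs
  rw [Measure.map_apply hm (MeasurableSet.univ_pi hs)]
  have : (fun x : α → β → ℝ => fun p : α × β => x p.1 p.2) ⁻¹' (univ.pi s) =
      univ.pi (fun a => univ.pi (fun b => s (a, b))) := by
    ext x
    simp
  rw [this, Measure.pi_pi, Fintype.prod_prod_type]
  simp_rw [Measure.pi_pi]

lemma integrable_bdd {α : Type*} [MeasurableSpace α] {μ : Measure α} [IsFiniteMeasure μ]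
    {f : α → ℝ} (hf : Measurable f) (C : ℝ) (hC : ∀ x, |f x| ≤ C) : Integrable f μ :=
  Integrable.of_bound hf.aestronglyMeasurable C (Eventually.of_forall hC)

lemma fun_le_of_set {α : Type*} [MeasurableSpace α] {μ : Measure α} [IsFiniteMeasure μ]
    {Φ f : α → ℝ} {ε C : ℝ} (hΦ : Measurable Φ) (hb : ∀ x, |Φ x| ≤ C)
    (hf : Measurable f) (hf0 : ∀ x, f x ∈ Icc (0:ℝ) 1)
    (h : ∀ S, MeasurableSet S → |∫ x in S, Φ x ∂μ| ≤ ε) : |∫ x, Φ x * f x ∂μ| ≤ ε := by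
  have hi : Integrable Φ μ := integrable_bdd hΦ C hb
  have hif : Integrable (fun x => Φ x * f x) μ := by
    refine integrable_bdd (hΦ.mul hf) C fun x => ?_
    rw [abs_mul]
    have := hb x
    have h1 : |f x| ≤ 1 := by rw [abs_of_nonneg (hf0 x).1]; exact (hf0 x).2
    calc |Φ x| * |f x| ≤ |Φ x| * 1 := by gcongr
      _ ≤ C := by simpa using this
  rw [abs_le]
  constructor
  · have hS : MeasurableSet {x | Φ x < 0} := measurableSet_lt hΦ measurable_const
    have h2 := (abs_le.1 (h _ hS)).1
    rw [← integral_indicator hS] at h2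
    refine h2.trans (integral_mono (hi.indicator hS) hif fun x => ?_)
    by_cases hx : Φ x < 0
    · simp only [indicator, mem_ofPred_eq, hx, if_true]
      nlinarith [(hf0 x).2]
    · simp only [indicator, mem_ofPred_eq, hx, if_false]
      exact mul_nonneg (not_lt.1 hx) (hf0 x).1
  · have hS : MeasurableSet {x | 0 < Φ x} := measurableSet_lt measurable_const hΦ
    have h2 := (abs_le.1 (h _ hS)).2
    rw [← integral_indicator hS] at h2
    refine le_trans (integral_mono hif (hi.indicator hS) fun x => ?_) h2
    by_cases hx : 0 < Φ x
    · simp only [indicator, mem_ofPred_eq, hx, if_true]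
      nlinarith [(hf0 x).2]
    · simp only [indicator, mem_ofPred_eq, hx, if_false]
      exact mul_nonpos_of_nonpos_of_nonneg (not_lt.1 hx) (hf0 x).1

/-- cut norm bound in set form -/
def CutLe (U : ℝ → ℝ → ℝ) (ε : ℝ) : Prop :=
  ∀ S T : Set ℝ, MeasurableSet S → MeasurableSet T →
    |∫ x in S, ∫ y in T, U x y ∂mu ∂mu| ≤ ε

lemma meas_int {α β : Type*} [MeasurableSpace α] [MeasurableSpace β] {ν : Measure β} [SFinite ν]
    {U : α → β → ℝ} (hU : Measurable (Function.uncurry U)) :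
    Measurable (fun x => ∫ y, U x y ∂ν) :=
  (hU.stronglyMeasurable.integral_prod_right (ν := ν)).measurable

lemma abs_int_le {β : Type*} [MeasurableSpace β] {ν : Measure β} [IsFiniteMeasure ν]
    (hν : ν univ ≤ 1) {f : β → ℝ} {C : ℝ} (hC : 0 ≤ C) (h : ∀ x, |f x| ≤ C) : |∫ x, f x ∂ν| ≤ C := by
  have := norm_integral_le_of_norm_le_const (μ := ν) (f := f) (C := C) (Eventually.of_forall h)
  refine this.trans ?_
  have : ν.real univ ≤ 1 := by
    rw [Measure.real]
    exact ENNReal.toReal_le_of_le_ofReal zero_le_one (by simpa using hν)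
  nlinarith

lemma cut_fun {U : ℝ → ℝ → ℝ} {ε C : ℝ} (hU : Measurable (Function.uncurry U))
    (hb : ∀ x y, |U x y| ≤ C) (h : CutLe U ε) {f g : ℝ → ℝ} (hf : Measurable f)
    (hg : Measurable g) (hf0 : ∀ x, f x ∈ Icc (0:ℝ) 1) (hg0 : ∀ x, g x ∈ Icc (0:ℝ) 1) :
    |∫ x, ∫ y, U x y * f x * g y ∂mu ∂mu| ≤ ε := by
  have hC : 0 ≤ C := (abs_nonneg _).trans (hb 0 0)
  have hmg : Measurable (Function.uncurry fun x y => U x y * g y) :=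
    hU.mul (hg.comp measurable_snd)
  have hbg : ∀ x y, |U x y * g y| ≤ C := by
    intro x y
    rw [abs_mul]
    have h1 : |g y| ≤ 1 := by rw [abs_of_nonneg (hg0 y).1]; exact (hg0 y).2
    calc |U x y| * |g y| ≤ |U x y| * 1 := by gcongr
      _ ≤ C := by simpa using hb x y
  have e1 : (fun x => ∫ y, U x y * f x * g y ∂mu) = fun x => (∫ y, U x y * g y ∂mu) * f x := by
    funext x
    rw [← integral_mul_const]
    congr 1; funext y; ring
  rw [e1]
  refine fun_le_of_set (C := C) (meas_int hmg) (fun x => abs_int_le (by simp) hC (hbg x)) hf hf0 ?_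
  intro S hS
  rw [integral_integral_swap]
  swap
  · exact integrable_bdd hmg C (fun p => hbg p.1 p.2)
  simp_rw [integral_mul_const]
  have hU' : Measurable (Function.uncurry fun y x => U x y) := hU.comp measurable_swap
  have hp : (mu.restrict S) univ ≤ 1 := by
    rw [Measure.restrict_apply_univ]; exact prob_le_one
  refine fun_le_of_set (C := C) (meas_int hU') (fun x => abs_int_le hp hC (fun y => hb y x)) hg hg0 ?_
  intro T hT
  rw [integral_integral_swap]
  · exact h S T hS hT
  · exact integrable_bdd hU' C (fun p => hb p.2 p.1)

/-- product over pairs -/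
def pprod {ι : Type} (P : Finset (ι × ι)) (K : ι × ι → ℝ → ℝ → ℝ) (x : ι → ℝ) : ℝ :=
  ∏ e ∈ P, K e (x e.1) (x e.2)

lemma meas_pprod {ι : Type} [Fintype ι] (P : Finset (ι × ι)) {K : ι × ι → ℝ → ℝ → ℝ}
    (hK : ∀ e, Measurable (Function.uncurry (K e))) : Measurable (pprod P K) := by
  unfold pprod
  refine Finset.measurable_prod _ fun e _ => ?_
  have : Measurable fun x : ι → ℝ => (x e.1, x e.2) := by fun_prop
  exact (hK e).comp this

lemma pprod_mem {ι : Type} (P : Finset (ι × ι)) {K : ι × ι → ℝ → ℝ → ℝ}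
    (hK : ∀ e x y, K e x y ∈ Icc (0:ℝ) 1) (x : ι → ℝ) : pprod P K x ∈ Icc (0:ℝ) 1 :=
  ⟨Finset.prod_nonneg fun e _ => (hK e _ _).1,
    Finset.prod_le_one (fun e _ => (hK e _ _).1) fun e _ => (hK e _ _).2⟩

lemma pprod_congr {ι : Type} (P : Finset (ι × ι)) {K : ι × ι → ℝ → ℝ → ℝ} {x y : ι → ℝ}
    (h : ∀ e ∈ P, x e.1 = y e.1 ∧ x e.2 = y e.2) : pprod P K x = pprod P K y :=
  Finset.prod_congr rfl fun e he => by rw [(h e he).1, (h e he).2]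

lemma count_single {ι : Type} [Fintype ι] [DecidableEq ι] (P : Finset (ι × ι))
    (hP : ∀ e ∈ P, e.1 ≠ e.2 ∧ (e.2, e.1) ∉ P) {K : ι × ι → ℝ → ℝ → ℝ}
    (hK : ∀ e, Measurable (Function.uncurry (K e))) (hK0 : ∀ e x y, K e x y ∈ Icc (0:ℝ) 1)
    {D : ℝ → ℝ → ℝ} {C ε : ℝ} (hD : Measurable (Function.uncurry D)) (hDb : ∀ x y, |D x y| ≤ C)
    (hcut : CutLe D ε) (i j : ι) (he : (i, j) ∈ P) :
    |∫ x, D (x i) (x j) * pprod (P.erase (i, j)) K x ∂(piMu ι)| ≤ ε := by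
  have hC : 0 ≤ C := (abs_nonneg _).trans (hDb 0 0)
  have hij : i ≠ j := (hP _ he).1
  have hji : (j, i) ∉ P := (hP _ he).2
  set F : (ι → ℝ) → ℝ := fun x => D (x i) (x j) * pprod (P.erase (i, j)) K x with hF
  have hFm : Measurable F := by
    have : Measurable fun x : ι → ℝ => (x i, x j) := by fun_prop
    exact (hD.comp this).mul (meas_pprod _ hK)
  have hFb : ∀ x, |F x| ≤ C := by
    intro x
    have h0 := pprod_mem (P.erase (i, j)) hK0 x
    rw [hF]; simp only [abs_mul]
    rw [abs_of_nonneg h0.1]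
    calc |D (x i) (x j)| * _ ≤ |D (x i) (x j)| * 1 := by gcongr; exact h0.2
      _ ≤ C := by simpa using hDb _ _
  have hmp : MeasurePreserving (fun p : ((ι → ℝ) × ℝ) × ℝ =>
      Function.update (Function.update p.1.1 i p.1.2) j p.2)
      (((piMu ι).prod mu).prod mu) (piMu ι) :=
    (mp_resample j).comp ((mp_resample i).prod (MeasurePreserving.id mu))
  rw [← hmp.map_eq, integral_map hmp.measurable.aemeasurable hFm.aestronglyMeasurable]
  have hIntg : Integrable (fun p : ((ι → ℝ) × ℝ) × ℝ =>
      F (Function.update (Function.update p.1.1 i p.1.2) j p.2)) (((piMu ι).prod mu).prod mu) :=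
    integrable_bdd (hFm.comp hmp.measurable) C fun p => hFb _
  rw [integral_prod _ hIntg, integral_prod _ hIntg.integral_prod_left]
  have hε : 0 ≤ ε := (abs_nonneg _).trans (hcut ∅ ∅ MeasurableSet.empty MeasurableSet.empty)
  refine abs_int_le (by simp) hε fun z => ?_
  set A := (P.erase (i, j)).filter (fun e => e.1 = i ∨ e.2 = i) with hA
  set B := (P.erase (i, j)).filter (fun e => ¬ (e.1 = i ∨ e.2 = i)) with hB
  have key : ∀ s t, F (Function.update (Function.update z i s) j t) =
      D s t * pprod A K (Function.update z i s) * pprod B K (Function.update z j t) := by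
    intro s t
    have h1 : pprod (P.erase (i, j)) K (Function.update (Function.update z i s) j t) =
        pprod A K (Function.update (Function.update z i s) j t) *
        pprod B K (Function.update (Function.update z i s) j t) := by
      unfold pprod
      rw [hA, hB, Finset.prod_filter_mul_prod_filter_not]
    have h2 : pprod A K (Function.update (Function.update z i s) j t) =
        pprod A K (Function.update z i s) := by
      apply pprod_congr
      rintro ⟨a, b⟩ hab
      simp only [hA, Finset.mem_filter, Finset.mem_erase] at hab
      obtain ⟨⟨hne, hm⟩, h⟩ := hab
      have ha : a ≠ j := by
        rintro rfl
        rcases h with h | h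
        · exact hij h.symm
        · exact hji ((show b = i from h) ▸ hm)
      have hb : b ≠ j := by
        rintro rfl
        rcases h with h | h
        · exact hne (by rw [show a = i from h])
        · exact hij h.symm
      simp [Function.update_of_ne ha, Function.update_of_ne hb]
    have h3 : pprod B K (Function.update (Function.update z i s) j t) =
        pprod B K (Function.update z j t) := by
      apply pprod_congr
      rintro ⟨a, b⟩ hab
      simp only [hB, Finset.mem_filter, not_or] at hab
      obtain ⟨_, h, h'⟩ := hab
      rw [Function.update_comm hij]
      simp [Function.update_of_ne h, Function.update_of_ne h']
    simp only [hF]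
    rw [h1, h2, h3]
    simp [hij]
    ring
  simp_rw [key]
  have hu : ∀ k : ι, Measurable fun s : ℝ => Function.update z k s := fun k => by fun_prop
  exact cut_fun hD hDb hcut ((meas_pprod A hK).comp (hu i)) ((meas_pprod B hK).comp (hu j))
    (fun _ => pprod_mem _ hK0 _) (fun _ => pprod_mem _ hK0 _)

lemma count_lemma {ι : Type} [Fintype ι] [DecidableEq ι] (P : Finset (ι × ι))
    (hP : ∀ e ∈ P, e.1 ≠ e.2 ∧ (e.2, e.1) ∉ P) {K L : ι × ι → ℝ → ℝ → ℝ}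
    (hK : ∀ e, Measurable (Function.uncurry (K e))) (hK0 : ∀ e x y, K e x y ∈ Icc (0:ℝ) 1)
    (hL : ∀ e, Measurable (Function.uncurry (L e))) (hL0 : ∀ e x y, L e x y ∈ Icc (0:ℝ) 1)
    {ε : ℝ} (hcut : ∀ e, CutLe (fun x y => K e x y - L e x y) ε) :
    |∫ x, pprod P K x ∂(piMu ι) - ∫ x, pprod P L x ∂(piMu ι)| ≤ P.card * ε := by
  have main : ∀ S : Finset (ι × ι), S ⊆ P →
      |∫ x, pprod P (fun e => if e ∈ S then K e else L e) x ∂(piMu ι)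
        - ∫ x, pprod P L x ∂(piMu ι)| ≤ S.card * ε := by
    intro S
    induction S using Finset.induction_on with
    | empty => intro _; simp
    | insert e S heS ih =>
      intro hS
      have heP : e ∈ P := hS (Finset.mem_insert_self _ _)
      have ih' := ih ((Finset.subset_insert _ _).trans hS)
      set M : ι × ι → ℝ → ℝ → ℝ := fun e' => if e' ∈ S then K e' else L e' with hM
      set M' : ι × ι → ℝ → ℝ → ℝ := fun e' => if e' ∈ insert e S then K e' else L e' with hM'
      have hMm : ∀ e', Measurable (Function.uncurry (M e')) := by
        intro e'; simp only [hM]; split_ifs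
        exacts [hK _, hL _]
      have hM'm : ∀ e', Measurable (Function.uncurry (M' e')) := by
        intro e'; simp only [hM']; split_ifs
        exacts [hK _, hL _]
      have hM0 : ∀ e' x y, M e' x y ∈ Icc (0:ℝ) 1 := by
        intro e' x y; simp only [hM]; split_ifs
        exacts [hK0 _ _ _, hL0 _ _ _]
      have hM'0 : ∀ e' x y, M' e' x y ∈ Icc (0:ℝ) 1 := by
        intro e' x y; simp only [hM']; split_ifs
        exacts [hK0 _ _ _, hL0 _ _ _]
      have hintM : Integrable (pprod P M) (piMu ι) := integrable_bdd (meas_pprod P hMm) 1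
        fun x => by
          have := pprod_mem P hM0 x
          rw [abs_of_nonneg this.1]; exact this.2
      have hintM' : Integrable (pprod P M') (piMu ι) := integrable_bdd (meas_pprod P hM'm) 1
        fun x => by
          have := pprod_mem P hM'0 x
          rw [abs_of_nonneg this.1]; exact this.2
      have hstep : |∫ x, pprod P M' x ∂(piMu ι) - ∫ x, pprod P M x ∂(piMu ι)| ≤ ε := by
        rw [← integral_sub hintM' hintM]
        have heq : ∀ x, pprod P M' x - pprod P M x =
            (K e (x e.1) (x e.2) - L e (x e.1) (x e.2)) * pprod (P.erase e) M x := by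
          intro x
          unfold pprod
          rw [← Finset.mul_prod_erase P _ heP, ← Finset.mul_prod_erase P (fun e => M e _ _) heP]
          have : ∏ e' ∈ P.erase e, M' e' (x e'.1) (x e'.2) =
              ∏ e' ∈ P.erase e, M e' (x e'.1) (x e'.2) := by
            refine Finset.prod_congr rfl fun e' he' => ?_
            have hne := Finset.ne_of_mem_erase he'
            simp [hM, hM', hne]
          rw [this]
          simp only [hM, hM', Finset.mem_insert_self, if_true, heS, if_false]
          ring
        simp_rw [heq]
        refine count_single P hP hMm hM0 (C := 1) (D := fun x y => K e x y - L e x y)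
          ((hK e).sub (hL e)) ?_ (hcut e) e.1 e.2 heP
        intro x y
        have h1 := hK0 e x y
        have h2 := hL0 e x y
        rw [abs_le]; constructor <;> linarith [h1.1, h1.2, h2.1, h2.2]
      rw [Finset.card_insert_of_notMem heS]
      push_cast
      calc _ ≤ |∫ x, pprod P M' x ∂(piMu ι) - ∫ x, pprod P M x ∂(piMu ι)| +
          |∫ x, pprod P M x ∂(piMu ι) - ∫ x, pprod P L x ∂(piMu ι)| := abs_sub_le _ _ _
        _ ≤ ε + S.card * ε := add_le_add hstep ih'
        _ = _ := by ring
  have h := main P subset_rfl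
  have : ∀ x, pprod P (fun e => if e ∈ P then K e else L e) x = pprod P K x := by
    intro x
    refine Finset.prod_congr rfl fun e he => ?_
    simp [he]
  simpa only [this] using h

/-- index of the cell containing a point -/
def cell (n : ℕ) (hn : 0 < n) (x : ℝ) : Fin n :=
  ⟨min (⌈(n : ℝ) * x⌉ - 1).toNat (n - 1), by omega⟩

lemma meas_cell (n : ℕ) (hn : 0 < n) : Measurable (cell n hn) := by
  have h1 : Measurable fun x : ℝ => ⌈(n : ℝ) * x⌉ := (measurable_const.mul measurable_id).ceil
  have h2 : Measurable fun z : ℤ => (⟨min (z - 1).toNat (n - 1), by omega⟩ : Fin n) :=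
    measurable_of_countable _
  exact h2.comp h1

lemma cell_ceil {n : ℕ} (hn : 0 < n) {x : ℝ} (hx : x ∈ Ioc (0:ℝ) 1) :
    ⌈(n : ℝ) * x⌉ = ((cell n hn x : ℕ) : ℤ) + 1 := by
  have hn' : (0:ℝ) < n := by exact_mod_cast hn
  have h1 : 0 < ⌈(n : ℝ) * x⌉ := Int.ceil_pos.2 (mul_pos hn' hx.1)
  have h2 : ⌈(n : ℝ) * x⌉ ≤ n := Int.ceil_le.2 (by push_cast; nlinarith [hx.2])
  simp only [cell]
  omega

lemma cell_eq_iff {n : ℕ} (hn : 0 < n) {x : ℝ} (hx : x ∈ Ioc (0:ℝ) 1) (i : Fin n) :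
    ⌈(n : ℝ) * x⌉ = ((i : ℕ) : ℤ) + 1 ↔ cell n hn x = i := by
  rw [cell_ceil hn hx, Fin.ext_iff]
  omega

lemma mem_Ioc_iff_ceil {n : ℕ} (hn : 0 < n) (x : ℝ) (i : Fin n) :
    x ∈ Ioc (((i:ℕ):ℝ)/n) ((((i:ℕ):ℝ)+1)/n) ↔ ⌈(n : ℝ) * x⌉ = ((i : ℕ) : ℤ) + 1 := by
  have hn' : (0:ℝ) < n := by exact_mod_cast hn
  rw [Int.ceil_eq_iff, mem_Ioc, div_lt_iff₀ hn', le_div_iff₀ hn']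
  push_cast
  rw [mul_comm x]
  simp

lemma mem_Ioc_iff_cell {n : ℕ} (hn : 0 < n) {x : ℝ} (hx : x ∈ Ioc (0:ℝ) 1) (i : Fin n) :
    x ∈ Ioc (((i:ℕ):ℝ)/n) ((((i:ℕ):ℝ)+1)/n) ↔ cell n hn x = i := by
  rw [mem_Ioc_iff_ceil hn, cell_eq_iff hn hx]

lemma ae_Ioc : ∀ᵐ x ∂mu, x ∈ Ioc (0:ℝ) 1 := by
  have : mu = volume.restrict (Ioc (0:ℝ) 1) := (restrict_Ioc_eq_restrict_Icc).symm
  rw [this]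
  exact ae_restrict_mem measurableSet_Ioc

lemma ae_prod_of_ae {p : ℝ → Prop} (h : ∀ᵐ x ∂mu, p x) :
    ∀ᵐ q ∂(mu.prod mu), p q.1 ∧ p q.2 := by
  have h1 := (Measure.quasiMeasurePreserving_fst (μ := mu) (ν := mu)).ae h
  have h2 := (Measure.quasiMeasurePreserving_snd (μ := mu) (ν := mu)).ae h
  filter_upwards [h1, h2] with q a b using ⟨a, b⟩

lemma mu_cell {n : ℕ} (hn : 0 < n) (i : Fin n) : mu.real (cell n hn ⁻¹' {i}) = 1 / n := by
  have hn' : (0:ℝ) < n := by exact_mod_cast hn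
  have : (cell n hn ⁻¹' {i} : Set ℝ) =ᵐ[mu] Ioc (((i:ℕ):ℝ)/n) ((((i:ℕ):ℝ)+1)/n) := by
    filter_upwards [ae_Ioc] with x hx
    exact propext (mem_Ioc_iff_cell hn hx i).symm
  rw [measureReal_congr this]
  have hsub : Ioc (((i:ℕ):ℝ)/n) ((((i:ℕ):ℝ)+1)/n) ⊆ Icc (0:ℝ) 1 := by
    intro x hx
    refine ⟨le_trans (by positivity) hx.1.le, hx.2.trans ?_⟩
    rw [div_le_one hn']
    exact_mod_cast i.2
  rw [Measure.real, Measure.restrict_apply measurableSet_Ioc, inter_eq_left.2 hsub, Real.volume_Ioc,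
    ENNReal.toReal_ofReal]
  · ring
  · rw [add_div]; simp

lemma step_int1 {n : ℕ} (hn : 0 < n) (g : Fin n → ℝ) (ν : Measure ℝ) [IsFiniteMeasure ν] :
    ∫ y, g (cell n hn y) ∂ν = ∑ v, ν.real (cell n hn ⁻¹' {v}) * g v := by
  have hm : Measurable g := measurable_of_countable _
  rw [← integral_map (φ := cell n hn) (meas_cell n hn).aemeasurable hm.aestronglyMeasurable,
    integral_fintype (.of_finite)]
  refine Finset.sum_congr rfl fun v _ => ?_
  rw [smul_eq_mul, Measure.real, Measure.map_apply (meas_cell n hn) (MeasurableSet.singleton v),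
    Measure.real]

lemma step_int2 {n : ℕ} (hn : 0 < n) (c : Fin n → Fin n → ℝ) (ν ν' : Measure ℝ)
    [IsFiniteMeasure ν] [IsFiniteMeasure ν'] :
    ∫ x, ∫ y, c (cell n hn x) (cell n hn y) ∂ν' ∂ν =
      ∑ u, ∑ v, ν.real (cell n hn ⁻¹' {u}) * ν'.real (cell n hn ⁻¹' {v}) * c u v := by
  simp_rw [fun x => step_int1 hn (fun v => c (cell n hn x) v) ν']
  rw [step_int1 hn (fun u => ∑ v, ν'.real (cell n hn ⁻¹' {v}) * c u v) ν]
  simp_rw [Finset.mul_sum, mul_assoc]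

open Classical in
lemma graphonOfGraph_cell {n : ℕ} (hn : 0 < n) (G : SimpleGraph (Fin n)) {x y : ℝ}
    (hx : x ∈ Ioc (0:ℝ) 1) (hy : y ∈ Ioc (0:ℝ) 1) :
    graphonOfGraph G x y = if G.Adj (cell n hn x) (cell n hn y) then 1 else 0 := by
  unfold graphonOfGraph
  simp_rw [cell_eq_iff hn hx, cell_eq_iff hn hy]
  congr 1
  apply propext
  constructor
  · rintro ⟨i, j, h, rfl, rfl⟩; exact h
  · intro h; exact ⟨_, _, h, rfl, rfl⟩

lemma graphonOfGraph_mem {n : ℕ} (G : SimpleGraph (Fin n)) (x y : ℝ) :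
    graphonOfGraph G x y ∈ Icc (0:ℝ) 1 := by
  unfold graphonOfGraph
  split_ifs <;> simp

lemma sub_abs_le {a b : ℝ} (h1 : a ∈ Icc (0:ℝ) 1) (h2 : b ∈ Icc (0:ℝ) 1) : |a - b| ≤ 1 := by
  rw [abs_le]; constructor <;> linarith [h1.1, h1.2, h2.1, h2.2]

lemma prod_mu_restrict {S T : Set ℝ} (hS : MeasurableSet S) (hT : MeasurableSet T) :
    (mu.restrict S).prod (mu.restrict T) =
      (volume : Measure (ℝ × ℝ)).restrict ((S ∩ Icc 0 1) ×ˢ (T ∩ Icc 0 1)) := by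
  rw [Measure.restrict_restrict hS, Measure.restrict_restrict hT, Measure.prod_restrict]
  rfl

lemma cutNorm_bdd {U : ℝ → ℝ → ℝ} (hb : ∀ x y, |U x y| ≤ 1) :
    BddAbove { r : ℝ | ∃ S T : Set ℝ, MeasurableSet S ∧ MeasurableSet T ∧
    S ⊆ Set.Icc 0 1 ∧ T ⊆ Set.Icc 0 1 ∧
    r = |∫ p in S ×ˢ T, U p.1 p.2| } := by
  refine ⟨1, ?_⟩
  rintro _ ⟨S, T, hS, hT, hS1, hT1, rfl⟩
  have h := prod_mu_restrict hS hT
  rw [inter_eq_left.2 hS1, inter_eq_left.2 hT1] at h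
  rw [← h]
  refine abs_int_le ?_ zero_le_one fun p => hb _ _
  rw [← univ_prod_univ, Measure.prod_prod]
  simp only [Measure.restrict_apply_univ]
  exact mul_le_one' prob_le_one prob_le_one

lemma cutLe_of_cutNorm {U U' : ℝ → ℝ → ℝ} {ε : ℝ} (hb : ∀ x y, |U x y| ≤ 1)
    (hU' : Measurable (Function.uncurry U')) (hb' : ∀ x y, |U' x y| ≤ 1)
    (hae : ∀ᵐ q ∂(mu.prod mu), U q.1 q.2 = U' q.1 q.2) (h : cutNorm U ≤ ε) : CutLe U' ε := by
  intro S T hS hT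
  refine le_trans ?_ h
  refine le_csSup (cutNorm_bdd hb) ⟨S ∩ Icc 0 1, T ∩ Icc 0 1, hS.inter measurableSet_Icc,
    hT.inter measurableSet_Icc, inter_subset_right, inter_subset_right, ?_⟩
  rw [← prod_mu_restrict hS hT]
  congr 1
  have hi : Integrable (fun p : ℝ × ℝ => U' p.1 p.2) ((mu.restrict S).prod (mu.restrict T)) :=
    integrable_bdd hU' 1 fun p => hb' _ _
  rw [← integral_prod _ hi]
  apply integral_congr_ae
  rw [Measure.prod_restrict]
  filter_upwards [ae_restrict_of_ae hae] with q hq using hq.symm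

lemma cutNorm_nonneg {U : ℝ → ℝ → ℝ} : 0 ≤ cutNorm U := by
  apply Real.sSup_nonneg
  rintro _ ⟨S, T, _, _, _, _, rfl⟩
  exact abs_nonneg _

lemma isMPSelf_id : IsMPSelf id := ⟨MeasurePreserving.id _, fun _ h => h⟩

lemma deltaCut_nonneg (U W : ℝ → ℝ → ℝ) : 0 ≤ deltaCut U W := by
  apply Real.sInf_nonneg
  rintro _ ⟨_, _, _, _, rfl⟩
  exact cutNorm_nonneg

lemma exists_of_deltaCut_lt {U W : ℝ → ℝ → ℝ} {ε : ℝ} (h : deltaCut U W < ε) :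
    ∃ σ₁ σ₂ : ℝ → ℝ, IsMPSelf σ₁ ∧ IsMPSelf σ₂ ∧
      cutNorm (fun x y => U (σ₁ x) (σ₁ y) - W (σ₂ x) (σ₂ y)) < ε := by
  unfold deltaCut at h
  have hne : { r : ℝ | ∃ σ₁ σ₂ : ℝ → ℝ, IsMPSelf σ₁ ∧ IsMPSelf σ₂ ∧
    r = cutNorm (fun x y => U (σ₁ x) (σ₁ y) - W (σ₂ x) (σ₂ y)) }.Nonempty :=
    ⟨_, id, id, isMPSelf_id, isMPSelf_id, rfl⟩
  obtain ⟨_, ⟨σ₁, σ₂, h1, h2, rfl⟩, hr⟩ := exists_lt_of_csInf_lt hne h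
  exact ⟨σ₁, σ₂, h1, h2, hr⟩

lemma deltaCut_le (U W : ℝ → ℝ → ℝ) : deltaCut U W ≤ cutNorm (fun x y => U x y - W x y) := by
  refine csInf_le ⟨0, ?_⟩ ⟨id, id, isMPSelf_id, isMPSelf_id, rfl⟩
  rintro _ ⟨_, _, _, _, rfl⟩
  exact cutNorm_nonneg

open Classical in
/-- kernels for induced density of F in W -/
def kern {V : Type} (F : SimpleGraph V) (W : ℝ → ℝ → ℝ) : V × V → ℝ → ℝ → ℝ := fun e x y =>
  if F.Adj e.1 e.2 then W x y else 1 - W x y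

lemma meas_kern {V : Type} (F : SimpleGraph V) {W : ℝ → ℝ → ℝ}
    (hW : Measurable (Function.uncurry W)) (e : V × V) :
    Measurable (Function.uncurry (kern F W e)) := by
  by_cases h : F.Adj e.1 e.2
  · have : kern F W e = W := by funext x y; simp [kern, h]
    rw [this]; exact hW
  · have : kern F W e = fun x y => 1 - W x y := by funext x y; simp [kern, h]
    rw [this]; exact measurable_const.sub hW

lemma kern_mem {V : Type} (F : SimpleGraph V) {W : ℝ → ℝ → ℝ}
    (hW : ∀ x y, W x y ∈ Icc (0:ℝ) 1) (e : V × V) (x y : ℝ) : kern F W e x y ∈ Icc (0:ℝ) 1 := by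
  unfold kern
  have := hW x y
  split_ifs
  · exact this
  · constructor <;> linarith [this.1, this.2]

open Classical in
/-- kernels for injective induced density of F in G -/
def gkern {V : Type} {n : ℕ} (hn : 0 < n) (F : SimpleGraph V) (G : SimpleGraph (Fin n)) :
    V × V → ℝ → ℝ → ℝ := fun e x y =>
  if F.Adj e.1 e.2 then (if G.Adj (cell n hn x) (cell n hn y) then 1 else 0)
  else (if cell n hn x ≠ cell n hn y ∧ ¬ G.Adj (cell n hn x) (cell n hn y) then 1 else 0)

lemma meas_step {n : ℕ} (hn : 0 < n) (c : Fin n → Fin n → ℝ) :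
    Measurable (Function.uncurry fun x y => c (cell n hn x) (cell n hn y)) := by
  have h1 : Measurable fun p : ℝ × ℝ => (cell n hn p.1, cell n hn p.2) :=
    ((meas_cell n hn).comp measurable_fst).prodMk ((meas_cell n hn).comp measurable_snd)
  have h2 : Measurable fun p : Fin n × Fin n => c p.1 p.2 := measurable_of_countable _
  exact h2.comp h1

lemma meas_gkern {V : Type} {n : ℕ} (hn : 0 < n) (F : SimpleGraph V) (G : SimpleGraph (Fin n))
    (e : V × V) : Measurable (Function.uncurry (gkern hn F G e)) := by
  classical
  exact meas_step hn (fun u v => if F.Adj e.1 e.2 then (if G.Adj u v then 1 else 0)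
    else (if u ≠ v ∧ ¬ G.Adj u v then 1 else 0))

lemma gkern_mem {V : Type} {n : ℕ} (hn : 0 < n) (F : SimpleGraph V) (G : SimpleGraph (Fin n))
    (e : V × V) (x y : ℝ) : gkern hn F G e x y ∈ Icc (0:ℝ) 1 := by
  unfold gkern
  split_ifs <;> simp

lemma meas_comp2 {U : ℝ → ℝ → ℝ} (hU : Measurable (Function.uncurry U)) {σ : ℝ → ℝ}
    (hσ : Measurable σ) : Measurable (Function.uncurry fun x y => U (σ x) (σ y)) :=
  hU.comp ((hσ.comp measurable_fst).prodMk (hσ.comp measurable_snd))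

lemma mp_sigma {V : Type} [Fintype V] {σ : ℝ → ℝ} (hσ : IsMPSelf σ) {f : (V → ℝ) → ℝ}
    (hf : Measurable f) : ∫ x, f (fun i => σ (x i)) ∂(piMu V) = ∫ x, f x ∂(piMu V) := by
  have h : MeasurePreserving (fun (x : V → ℝ) i => σ (x i)) (piMu V) (piMu V) :=
    measurePreserving_pi (fun _ : V => mu) (fun _ : V => mu) (fun _ => hσ.1)
  conv_rhs => rw [← h.map_eq]
  rw [integral_map h.measurable.aemeasurable hf.aestronglyMeasurable]

lemma gkern_cut {V : Type} {n : ℕ} (hn : 0 < n) (F : SimpleGraph V) (G : SimpleGraph (Fin n))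
    {W : ℝ → ℝ → ℝ} (hW : IsGraphon W) {σ₁ σ₂ : ℝ → ℝ} (h1 : IsMPSelf σ₁) (h2 : IsMPSelf σ₂)
    {ε : ℝ}
    (hcut : cutNorm (fun x y => graphonOfGraph G (σ₁ x) (σ₁ y) - W (σ₂ x) (σ₂ y)) ≤ ε) (e : V × V) :
    CutLe (fun x y => gkern hn F G e (σ₁ x) (σ₁ y) - kern F W e (σ₂ x) (σ₂ y)) (ε + 1 / n) := by
  classical
  set A : ℝ → ℝ → ℝ := fun x y =>
    if G.Adj (cell n hn (σ₁ x)) (cell n hn (σ₁ y)) then 1 else 0 with hA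
  have hAm : Measurable (Function.uncurry A) :=
    meas_comp2 (meas_step hn fun u v => if G.Adj u v then 1 else 0) h1.1.measurable
  have hA0 : ∀ x y, A x y ∈ Icc (0:ℝ) 1 := by
    intro x y; simp only [hA]; split_ifs <;> simp
  have hWm : Measurable (Function.uncurry fun x y => W (σ₂ x) (σ₂ y)) :=
    meas_comp2 hW.2.1 h2.1.measurable
  have hbase : CutLe (fun x y => A x y - W (σ₂ x) (σ₂ y)) ε := by
    refine cutLe_of_cutNorm
      (fun x y => sub_abs_le (graphonOfGraph_mem G _ _) (hW.2.2 _ _)) (hAm.sub hWm)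
      (fun x y => sub_abs_le (hA0 x y) (hW.2.2 _ _)) ?_ hcut
    filter_upwards [ae_prod_of_ae (h1.1.quasiMeasurePreserving.ae ae_Ioc)] with q hq
    simp only [hA]
    rw [graphonOfGraph_cell hn G hq.1 hq.2]
  have hn0 : (0:ℝ) ≤ 1 / n := by positivity
  by_cases hF : F.Adj e.1 e.2
  · intro S T hS hT
    simp only [gkern, kern, hF, if_true]
    exact (hbase S T hS hT).trans (by linarith)
  · intro S T hS hT
    set D : ℝ → ℝ → ℝ := fun x y =>
      if cell n hn (σ₁ x) = cell n hn (σ₁ y) then 1 else 0 with hD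
    have hDm : Measurable (Function.uncurry D) :=
      meas_comp2 (meas_step hn fun u v => if u = v then 1 else 0) h1.1.measurable
    have hD0 : ∀ x y, D x y ∈ Icc (0:ℝ) 1 := by
      intro x y; simp only [hD]; split_ifs <;> simp
    have heq : ∀ x y, gkern hn F G e (σ₁ x) (σ₁ y) - kern F W e (σ₂ x) (σ₂ y) =
        - (A x y - W (σ₂ x) (σ₂ y)) - D x y := by
      intro x y
      simp only [gkern, kern, hF, if_false, hA, hD]
      by_cases ha : G.Adj (cell n hn (σ₁ x)) (cell n hn (σ₁ y))
      · have hne := ha.ne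
        simp [ha, hne]
      · by_cases hc : cell n hn (σ₁ x) = cell n hn (σ₁ y)
        · simp [hc]
        · simp [ha, hc]
    simp_rw [heq]
    have hp : ∀ R : Set ℝ, (mu.restrict R) univ ≤ 1 := fun R => by
      rw [Measure.restrict_apply_univ]; exact prob_le_one
    have hi1 : ∀ x, Integrable (fun y => -(A x y - W (σ₂ x) (σ₂ y))) (mu.restrict T) := fun x =>
      integrable_bdd ((hAm.of_uncurry_left (x := x)).sub (hWm.of_uncurry_left (x := x))).neg 1 fun y => by
        rw [abs_neg]; exact sub_abs_le (hA0 x y) (hW.2.2 _ _)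
    have hi2 : ∀ x, Integrable (fun y => D x y) (mu.restrict T) := fun x =>
      integrable_bdd (hDm.of_uncurry_left) 1 fun y => by
        rw [abs_of_nonneg (hD0 x y).1]; exact (hD0 x y).2
    have e1 : ∀ x, ∫ y in T, (-(A x y - W (σ₂ x) (σ₂ y)) - D x y) ∂mu =
        - (∫ y in T, (A x y - W (σ₂ x) (σ₂ y)) ∂mu) - ∫ y in T, D x y ∂mu := by
      intro x
      rw [integral_sub (hi1 x) (hi2 x), integral_neg]
    simp_rw [e1]
    have hj1 : Integrable (fun x => - ∫ y in T, (A x y - W (σ₂ x) (σ₂ y)) ∂mu) (mu.restrict S) :=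
      integrable_bdd (meas_int (ν := mu.restrict T) (hAm.sub hWm)).neg 1 fun x => by
        rw [abs_neg]
        exact abs_int_le (hp T) zero_le_one fun y => sub_abs_le (hA0 x y) (hW.2.2 _ _)
    have hDle : ∀ x, |∫ y in T, D x y ∂mu| ≤ 1 / n := by
      intro x
      have hnn : 0 ≤ ∫ y in T, D x y ∂mu := integral_nonneg fun y => (hD0 x y).1
      rw [abs_of_nonneg hnn]
      have hle : ∫ y in T, D x y ∂mu ≤ ∫ y, D x y ∂mu :=
        setIntegral_le_integral (integrable_bdd (hDm.of_uncurry_left) 1 fun y => by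
          rw [abs_of_nonneg (hD0 x y).1]; exact (hD0 x y).2)
          (Eventually.of_forall fun y => (hD0 x y).1)
      refine hle.trans ?_
      have hg : Measurable fun y => if cell n hn (σ₁ x) = cell n hn y then (1:ℝ) else 0 :=
        (measurable_of_countable fun v : Fin n =>
          if cell n hn (σ₁ x) = v then (1:ℝ) else 0).comp (meas_cell n hn)
      have h3 := integral_map (μ := mu) h1.1.measurable.aemeasurable
        (f := fun y => if cell n hn (σ₁ x) = cell n hn y then (1:ℝ) else 0)
        hg.aestronglyMeasurable
      rw [h1.1.map_eq] at h3
      simp only [hD]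
      rw [← h3, step_int1 hn (fun v => if cell n hn (σ₁ x) = v then (1:ℝ) else 0)]
      simp_rw [mu_cell]
      simp
    have hj2 : Integrable (fun x => ∫ y in T, D x y ∂mu) (mu.restrict S) :=
      integrable_bdd (meas_int hDm) (1/n) hDle
    rw [integral_sub hj1 hj2, integral_neg]
    refine (abs_sub _ _).trans ?_
    rw [abs_neg]
    exact add_le_add (hbase S T hS hT) (abs_int_le (hp S) hn0 hDle)

lemma sample_lemma {Q : GraphClass} {W : ℝ → ℝ → ℝ} (hW : W ∈ limitSet Q) {V : Type}
    [Fintype V] [DecidableEq V] (P : Finset (V × V))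
    (hP : ∀ e ∈ P, e.1 ≠ e.2 ∧ (e.2, e.1) ∉ P)
    (hcov : ∀ i j : V, i ≠ j → (i, j) ∈ P ∨ (j, i) ∈ P) (F : SimpleGraph V)
    (hpos : 0 < ∫ x, pprod P (kern F W) x ∂(piMu V)) :
    ∃ (n : ℕ) (G : SimpleGraph (Fin n)) (g : V → Fin n), G ∈ Q n ∧ Function.Injective g ∧
      F = G.comap g := by
  obtain ⟨hgr, nk, Gk, hmem, htop, hlim⟩ := hW
  set p := ∫ x, pprod P (kern F W) x ∂(piMu V) with hp
  set η : ℝ := p / (2 * (P.card + 1)) with hη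
  have hηpos : 0 < η := by positivity
  have ev1 : ∀ᶠ k in atTop, deltaCut (graphonOfGraph (Gk k)) W < η :=
    hlim.eventually (gt_mem_nhds hηpos)
  have ev2 : ∀ᶠ k in atTop, 1 / ((nk k : ℕ) : ℝ) < η := by
    have : Tendsto (fun k => 1 / ((nk k : ℕ) : ℝ)) atTop (nhds 0) :=
      tendsto_one_div_atTop_nhds_zero_nat.comp htop
    exact this.eventually (gt_mem_nhds hηpos)
  have ev3 : ∀ᶠ k in atTop, 0 < nk k := htop.eventually_gt_atTop 0
  obtain ⟨k, hk1, hk2, hn⟩ := (ev1.and (ev2.and ev3)).exists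
  set n := nk k
  set G := Gk k
  obtain ⟨σ₁, σ₂, h1, h2, hcut⟩ := exists_of_deltaCut_lt hk1
  have hc := fun e => gkern_cut hn F G hgr h1 h2 hcut.le e
  have hcl := count_lemma P hP
    (K := fun e x y => gkern hn F G e (σ₁ x) (σ₁ y))
    (L := fun e x y => kern F W e (σ₂ x) (σ₂ y))
    (fun e => meas_comp2 (meas_gkern hn F G e) h1.1.measurable)
    (fun e x y => gkern_mem _ _ _ _ _ _)
    (fun e => meas_comp2 (meas_kern F hgr.2.1 e) h2.1.measurable)
    (fun e x y => kern_mem _ hgr.2.2 _ _ _) hc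
  have e2 : ∫ x, pprod P (fun e x y => kern F W e (σ₂ x) (σ₂ y)) x ∂(piMu V) = p :=
    mp_sigma h2 (meas_pprod P (meas_kern F hgr.2.1))
  have e1 : ∫ x, pprod P (fun e x y => gkern hn F G e (σ₁ x) (σ₁ y)) x ∂(piMu V) =
      ∫ x, pprod P (gkern hn F G) x ∂(piMu V) :=
    mp_sigma h1 (meas_pprod P (meas_gkern hn F G))
  rw [e1, e2] at hcl
  have hbd : (P.card : ℝ) * (η + 1 / (n:ℝ)) < p := by
    have h3 : (P.card : ℝ) * (η + 1 / (n:ℝ)) ≤ P.card * (2 * η) := by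
      gcongr; linarith
    have h4 : (P.card + 1 : ℝ) * (2 * η) = p := by
      rw [hη]; field_simp
    nlinarith
  have hpos' : 0 < ∫ x, pprod P (gkern hn F G) x ∂(piMu V) := by
    have := (abs_le.1 hcl).1
    linarith
  have : ∃ x, pprod P (gkern hn F G) x ≠ 0 := by
    by_contra hcon
    push Not at hcon
    simp [hcon] at hpos'
  obtain ⟨x, hx⟩ := this
  have hx' : ∀ e ∈ P, gkern hn F G e (x e.1) (x e.2) ≠ 0 := Finset.prod_ne_zero_iff.1 hx
  have key : ∀ e ∈ P, cell n hn (x e.1) ≠ cell n hn (x e.2) ∧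
      (F.Adj e.1 e.2 ↔ G.Adj (cell n hn (x e.1)) (cell n hn (x e.2))) := by
    intro e he
    have := hx' e he
    unfold gkern at this
    by_cases hF : F.Adj e.1 e.2
    · by_cases hG : G.Adj (cell n hn (x e.1)) (cell n hn (x e.2))
      · exact ⟨hG.ne, by simp [hF, hG]⟩
      · simp [hF, hG] at this
    · simp only [hF, if_false, ne_eq, ite_eq_right_iff, one_ne_zero, imp_false, not_not] at this
      exact ⟨this.1, by simp [hF, this.2]⟩
  refine ⟨n, G, fun i => cell n hn (x i), hmem k, ?_, ?_⟩
  · intro i j hij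
    by_contra hne
    rcases hcov i j hne with h | h
    · exact (key _ h).1 hij
    · exact (key _ h).1 hij.symm
  · ext i j
    simp only [SimpleGraph.comap_adj]
    by_cases hne : i = j
    · subst hne; simp
    rcases hcov i j hne with h | h
    · exact (key _ h).2
    · have := (key _ h).2
      rw [F.adj_comm, G.adj_comm]; exact this

/-- membership in Q for graphs on arbitrary vertex types -/
def InQ (Q : GraphClass) {V : Type} (F : SimpleGraph V) : Prop :=
  ∀ (N : ℕ) (g : Fin N → V), Function.Injective g → F.comap g ∈ Q N

lemma mem_of_injective {Q : GraphClass} (hQ : IsHereditary Q) {N n : ℕ} {G : SimpleGraph (Fin n)}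
    (hG : G ∈ Q n) (g : Fin N → Fin n) (hg : Function.Injective g) : G.comap g ∈ Q N := by
  classical
  have hcard : (Finset.univ.image g).card = N := by
    rw [Finset.card_image_of_injective _ hg]; simp
  set f := (Finset.univ.image g).orderEmbOfFin hcard with hf
  have hex : ∀ i, ∃ k, f k = g i := by
    intro i
    have : g i ∈ Set.range f := by
      rw [hf, Finset.range_orderEmbOfFin]; simp
    exact this
  choose π hπ using hex
  have hinj : Function.Injective π := by
    intro a b hab
    apply hg
    rw [← hπ a, ← hπ b, hab]
  have hbij : Function.Bijective π := Finite.injective_iff_bijective.1 hinj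
  have h1 : G.comap f ∈ Q N := hQ.2 N n f f.strictMono G hG
  have h2 := hQ.1 N (Equiv.ofBijective π hbij) _ h1
  convert h2 using 1
  ext i j
  simp [hπ]

lemma InQ.comap {Q : GraphClass} {V V' : Type} {F : SimpleGraph V} (h : InQ Q F) (g : V' → V)
    (hg : Function.Injective g) : InQ Q (F.comap g) := by
  intro N f hf
  rw [SimpleGraph.comap_comap]
  exact h N (g ∘ f) (hg.comp hf)

lemma inQ_of_sample {Q : GraphClass} (hQ : IsHereditary Q) {W : ℝ → ℝ → ℝ} (hW : W ∈ limitSet Q)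
    {V : Type} [Fintype V] [DecidableEq V] (P : Finset (V × V))
    (hP : ∀ e ∈ P, e.1 ≠ e.2 ∧ (e.2, e.1) ∉ P)
    (hcov : ∀ i j : V, i ≠ j → (i, j) ∈ P ∨ (j, i) ∈ P) (F : SimpleGraph V)
    (hpos : 0 < ∫ x, pprod P (kern F W) x ∂(piMu V)) : InQ Q F := by
  obtain ⟨n, G, g, hG, hg, rfl⟩ := sample_lemma hW P hP hcov F hpos
  exact InQ.comap (fun N f hf => mem_of_injective hQ hG f hf) g hg

lemma ae_pi_succ {β : Type} [MeasurableSpace β] (ν : Measure β) [IsProbabilityMeasure ν] (r : ℕ) :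
    MeasurePreserving (fun p : β × (Fin r → β) => (Fin.cons p.1 p.2 : Fin (r+1) → β))
      (ν.prod (Measure.pi fun _ : Fin r => ν)) (Measure.pi fun _ : Fin (r+1) => ν) := by
  have h := (measurePreserving_piFinSuccAbove (fun _ : Fin (r+1) => ν) 0).symm
  have he : (fun p : β × (Fin r → β) => (Fin.cons p.1 p.2 : Fin (r+1) → β)) =
      ⇑(MeasurableEquiv.piFinSuccAbove (fun _ : Fin (r+1) => β) 0).symm := by
    funext p
    exact (Fin.insertNth_zero (α := fun _ : Fin (r+1) => β) p.1 p.2).symm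
  rw [he]
  exact h

lemma blow (m r : ℕ) : ∀ (E : Set (Fin r → ℝ)), MeasurableSet E →
    (∀ᵐ x ∂(Measure.pi fun _ : Fin r => piMu (Fin m)), ∃ f : Fin r → Fin m,
      (fun i => x i (f i)) ∉ E) → ∀ᵐ z ∂(piMu (Fin r)), z ∉ E := by
  induction r with
  | zero =>
    intro E hE h
    obtain ⟨x, f, hx⟩ := h.exists
    refine Eventually.of_forall fun z => ?_
    convert hx
  | succ r ih =>
    intro E hE h
    have hmeas : Measurable (fun p : ℝ × (Fin r → ℝ) => (Fin.cons p.1 p.2 : Fin (r+1) → ℝ)) :=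
      (ae_pi_succ mu r).measurable
    have h1 := (ae_pi_succ (piMu (Fin m)) r).quasiMeasurePreserving.ae h
    have h2 := Measure.ae_ae_of_ae_prod h1
    have h3 : ∀ᵐ y ∂(piMu (Fin m)), ∀ᵐ z ∂(piMu (Fin r)),
        ∃ a, (Fin.cons (y a) z : Fin (r+1) → ℝ) ∉ E := by
      filter_upwards [h2] with y hy
      have hE' : MeasurableSet {z : Fin r → ℝ | ∀ a : Fin m, (Fin.cons (y a) z : Fin (r+1) → ℝ) ∈ E} := by
        have : {z : Fin r → ℝ | ∀ a : Fin m, (Fin.cons (y a) z : Fin (r+1) → ℝ) ∈ E} =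
            ⋂ a : Fin m, (fun z : Fin r → ℝ => (y a, z)) ⁻¹'
              ((fun p : ℝ × (Fin r → ℝ) => (Fin.cons p.1 p.2 : Fin (r+1) → ℝ)) ⁻¹' E) := by
          ext z; simp
        rw [this]
        refine MeasurableSet.iInter fun a => ?_
        exact measurable_prodMk_left (hmeas hE)
      have := ih _ hE' (by
        filter_upwards [hy] with xs hxs
        obtain ⟨f, hf⟩ := hxs
        refine ⟨fun i => f i.succ, fun hcon => hf ?_⟩
        have := hcon (f 0)
        convert this using 1
        funext i
        refine Fin.cases ?_ (fun j => ?_) i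
        · simp
        · simp)
      filter_upwards [this] with z hz
      simpa using hz
    have hmeas2 : MeasurableSet {p : (Fin m → ℝ) × (Fin r → ℝ) |
        ∃ a, (Fin.cons (p.1 a) p.2 : Fin (r+1) → ℝ) ∉ E} := by
      have : {p : (Fin m → ℝ) × (Fin r → ℝ) |
        ∃ a, (Fin.cons (p.1 a) p.2 : Fin (r+1) → ℝ) ∉ E} =
        ⋃ a : Fin m, (fun p : (Fin m → ℝ) × (Fin r → ℝ) => (p.1 a, p.2)) ⁻¹'
              ((fun p : ℝ × (Fin r → ℝ) => (Fin.cons p.1 p.2 : Fin (r+1) → ℝ)) ⁻¹' Eᶜ) := by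
        ext z; simp
      rw [this]
      refine MeasurableSet.iUnion fun a => ?_
      have hh : Measurable (fun p : (Fin m → ℝ) × (Fin r → ℝ) => (p.1 a, p.2)) := by fun_prop
      exact hh (hmeas hE.compl)
    have h4 := (Measure.ae_ae_comm hmeas2).1 h3
    have h5 : ∀ᵐ z ∂(piMu (Fin r)), ∀ᵐ t ∂mu, (Fin.cons t z : Fin (r+1) → ℝ) ∉ E := by
      filter_upwards [h4] with z hz
      set B : Set ℝ := {t | (Fin.cons t z : Fin (r+1) → ℝ) ∈ E} with hB
      have hz' : piMu (Fin m) (univ.pi fun _ : Fin m => B) = 0 := by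
        rw [← compl_mem_ae_iff]
        filter_upwards [hz] with y hy
        obtain ⟨a, ha⟩ := hy
        simp only [mem_compl_iff, mem_univ_pi, not_forall]
        exact ⟨a, ha⟩
      rw [Measure.pi_pi, Finset.prod_eq_zero_iff] at hz'
      obtain ⟨_, _, h0⟩ := hz'
      rw [← compl_mem_ae_iff] at h0
      filter_upwards [h0] with t ht using ht
    have hmeas3 : MeasurableSet {p : ℝ × (Fin r → ℝ) | (Fin.cons p.1 p.2 : Fin (r+1) → ℝ) ∉ E} :=
      hmeas hE.compl
    have h6 : ∀ᵐ t ∂mu, ∀ᵐ z ∂(piMu (Fin r)), (Fin.cons t z : Fin (r+1) → ℝ) ∉ E :=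
      (Measure.ae_ae_comm hmeas3).2 h5
    have h7 := (Measure.ae_prod_iff_ae_ae hmeas3).2 h6
    have hmp := ae_pi_succ mu r
    show ∀ᵐ z ∂(Measure.pi fun _ : Fin (r+1) => mu), z ∉ E
    rw [← hmp.map_eq, ae_map_iff hmp.measurable.aemeasurable hE.compl]
    exact h7

lemma ramsey_aux : ∀ (s a b : ℕ), a + b = s → ∃ m : ℕ, ∀ (V : Type) [DecidableEq V]
    (G : SimpleGraph V) (S : Finset V), m ≤ S.card →
    (∃ T ⊆ S, T.card = a ∧ ∀ u ∈ T, ∀ v ∈ T, u ≠ v → G.Adj u v) ∨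
    (∃ T ⊆ S, T.card = b ∧ ∀ u ∈ T, ∀ v ∈ T, u ≠ v → ¬ G.Adj u v) := by
  intro s
  induction s with
  | zero =>
    intro a b hab
    refine ⟨0, fun V _ G S _ => Or.inl ⟨∅, by simp, ?_, by simp⟩⟩
    simp; omega
  | succ s ih =>
    intro a b hab
    rcases a with _ | a
    · exact ⟨0, fun V _ G S _ => Or.inl ⟨∅, by simp, by simp, by simp⟩⟩
    rcases b with _ | b
    · exact ⟨0, fun V _ G S _ => Or.inr ⟨∅, by simp, by simp, by simp⟩⟩
    obtain ⟨m1, h1⟩ := ih a (b+1) (by omega)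
    obtain ⟨m2, h2⟩ := ih (a+1) b (by omega)
    refine ⟨m1 + m2 + 1, fun V _ G S hS => ?_⟩
    classical
    have hne : S.Nonempty := by
      rw [← Finset.card_pos]; omega
    obtain ⟨v, hv⟩ := hne
    have hcard : ((S.erase v).filter (G.Adj v)).card + ((S.erase v).filter (fun u => ¬ G.Adj v u)).card
        = S.card - 1 := by
      rw [Finset.card_filter_add_card_filter_not, Finset.card_erase_of_mem hv]
    by_cases hc : m1 ≤ ((S.erase v).filter (G.Adj v)).card
    · rcases h1 V G _ hc with ⟨T, hT, hTc, hTa⟩ | ⟨T, hT, hTc, hTa⟩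
      · left
        have hvT : v ∉ T := fun h => by simpa using hT h
        refine ⟨insert v T, ?_, by rw [Finset.card_insert_of_notMem hvT, hTc], ?_⟩
        · intro u hu
          rcases Finset.mem_insert.1 hu with rfl | hu
          · exact hv
          · exact Finset.mem_of_mem_erase (Finset.mem_filter.1 (hT hu)).1
        · intro u hu w hw huw
          rcases Finset.mem_insert.1 hu with rfl | hu2
          · rcases Finset.mem_insert.1 hw with rfl | hw2
            · exact absurd rfl huw
            · exact (Finset.mem_filter.1 (hT hw2)).2
          · rcases Finset.mem_insert.1 hw with rfl | hw2
            · exact (Finset.mem_filter.1 (hT hu2)).2.symm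
            · exact hTa u hu2 w hw2 huw
      · right
        exact ⟨T, fun u hu => Finset.mem_of_mem_erase (Finset.mem_filter.1 (hT hu)).1, hTc, hTa⟩
    · have hc2 : m2 ≤ ((S.erase v).filter (fun u => ¬ G.Adj v u)).card := by omega
      rcases h2 V G _ hc2 with ⟨T, hT, hTc, hTa⟩ | ⟨T, hT, hTc, hTa⟩
      · left
        exact ⟨T, fun u hu => Finset.mem_of_mem_erase (Finset.mem_filter.1 (hT hu)).1, hTc, hTa⟩
      · right
        have hvT : v ∉ T := fun h => by simpa using hT h
        refine ⟨insert v T, ?_, by rw [Finset.card_insert_of_notMem hvT, hTc], ?_⟩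
        · intro u hu
          rcases Finset.mem_insert.1 hu with rfl | hu
          · exact hv
          · exact Finset.mem_of_mem_erase (Finset.mem_filter.1 (hT hu)).1
        · intro u hu w hw huw
          rcases Finset.mem_insert.1 hu with rfl | hu2
          · rcases Finset.mem_insert.1 hw with rfl | hw2
            · exact absurd rfl huw
            · exact (Finset.mem_filter.1 (hT hw2)).2
          · rcases Finset.mem_insert.1 hw with rfl | hw2
            · exact fun h => (Finset.mem_filter.1 (hT hu2)).2 h.symm
            · exact hTa u hu2 w hw2 huw

lemma ramsey (n : ℕ) : ∃ m : ℕ, ∀ G : SimpleGraph (Fin m), ∃ (e : Fin n → Fin m) (t : Prop),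
    Function.Injective e ∧ ∀ a b, a ≠ b → (G.Adj (e a) (e b) ↔ t) := by
  obtain ⟨m, hm⟩ := ramsey_aux (n + n) n n rfl
  refine ⟨m, fun G => ?_⟩
  rcases hm (Fin m) G Finset.univ (by simp) with ⟨T, _, hT, hTa⟩ | ⟨T, _, hT, hTa⟩
  · refine ⟨T.orderEmbOfFin hT, True, (T.orderEmbOfFin hT).injective, fun a b hab => ?_⟩
    simp only [iff_true]
    exact hTa _ (Finset.orderEmbOfFin_mem _ _ _) _ (Finset.orderEmbOfFin_mem _ _ _)
      (fun h => hab ((T.orderEmbOfFin hT).injective h))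
  · refine ⟨T.orderEmbOfFin hT, False, (T.orderEmbOfFin hT).injective, fun a b hab => ?_⟩
    simp only [iff_false]
    exact hTa _ (Finset.orderEmbOfFin_mem _ _ _) _ (Finset.orderEmbOfFin_mem _ _ _)
      (fun h => hab ((T.orderEmbOfFin hT).injective h))

lemma exists_tournament (V : Type) [Fintype V] [DecidableEq V] : ∃ P : Finset (V × V),
    (∀ e ∈ P, e.1 ≠ e.2 ∧ (e.2, e.1) ∉ P) ∧ ∀ i j : V, i ≠ j → (i, j) ∈ P ∨ (j, i) ∈ P := by
  classical
  set f := Fintype.equivFin V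
  refine ⟨Finset.univ.filter fun e => f e.1 < f e.2, ?_, ?_⟩
  · intro e he
    simp only [Finset.mem_filter, Finset.mem_univ, true_and] at he ⊢
    exact ⟨fun h => by rw [h] at he; exact lt_irrefl _ he, not_lt.2 he.le⟩
  · intro i j hij
    simp only [Finset.mem_filter, Finset.mem_univ, true_and]
    exact lt_or_gt_of_ne (fun h => hij (f.injective h))

/-- within-part pattern exists -/
lemma exists_pattern {Q : GraphClass} (hQ : IsHereditary Q) {W : ℝ → ℝ → ℝ} (hW : W ∈ limitSet Q)
    (r : ℕ) (hK : ¬ KFree r (randIndicator W)) (m : ℕ) :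
    ∃ A : SimpleGraph (Fin r × Fin m), ∀ F : SimpleGraph (Fin r × Fin m),
      (∀ i a b, F.Adj (i, a) (i, b) ↔ A.Adj (i, a) (i, b)) → InQ Q F := by
  classical
  have hgr := hW.1
  rw [kfree_iff] at hK
  set g : (Fin r → ℝ) → ℝ := fun x =>
    ∏ i : Fin r, ∏ j : Fin r, if i < j then randIndicator W (x i) (x j) else 1 with hg
  have hRm : Measurable (Function.uncurry (randIndicator W)) := by
    have : Function.uncurry (randIndicator W) = fun p =>
        if p ∈ (Function.uncurry W) ⁻¹' (Ioo 0 1) then (1:ℝ) else 0 := by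
      funext p; simp [randIndicator, Function.uncurry]
    rw [this]
    exact Measurable.ite (hgr.2.1 measurableSet_Ioo) measurable_const measurable_const
  have hgm : Measurable g := by
    refine Finset.measurable_prod _ fun i _ => Finset.measurable_prod _ fun j _ => ?_
    by_cases hij : i < j
    · simp only [hij, if_true]
      have : Measurable fun x : Fin r → ℝ => (x i, x j) := by fun_prop
      exact hRm.comp this
    · simp only [hij, if_false]; exact measurable_const
  set E : Set (Fin r → ℝ) := {x | g x ≠ 0} with hE
  have hEm : MeasurableSet E := (hgm (measurableSet_singleton 0)).compl
  have hEiff : ∀ x ∈ E, ∀ i j, i ≠ j → 0 < W (x i) (x j) ∧ W (x i) (x j) < 1 := by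
    intro x hx
    have h1 : ∀ i j, i < j → 0 < W (x i) (x j) ∧ W (x i) (x j) < 1 := by
      intro i j hij
      have hx' : g x ≠ 0 := hx
      simp only [hg] at hx'
      rw [Finset.prod_ne_zero_iff] at hx'
      have h2 := hx' i (Finset.mem_univ _)
      rw [Finset.prod_ne_zero_iff] at h2
      have h3 := h2 j (Finset.mem_univ _)
      simp only [hij, if_true, randIndicator] at h3
      by_contra hcon
      rw [if_neg hcon] at h3
      exact h3 rfl
    intro i j hij
    rcases lt_or_gt_of_ne hij with h | h
    · exact h1 i j h
    · rw [hgr.1]; exact h1 j i h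
  have hnot : ¬ ∀ᵐ x ∂(piMu (Fin r × Fin m)), ∃ f : Fin r → Fin m,
      (fun i => x (i, f i)) ∉ E := by
    intro hcon
    apply hK
    have h1 := (mp_uncurry (Fin r) (Fin m)).quasiMeasurePreserving.ae hcon
    have h2 := blow m r E hEm h1
    filter_upwards [h2] with x hx
    by_contra h
    exact hx h
  obtain ⟨P, hP, hcov⟩ := exists_tournament (Fin r × Fin m)
  -- pattern at x
  set pat : (Fin r × Fin m → ℝ) → SimpleGraph (Fin r × Fin m) := fun x =>
    { Adj := fun p q => p ≠ q ∧ 0 < W (x p) (x q)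
      symm := ⟨fun p q h => ⟨h.1.symm, by rw [hgr.1]; exact h.2⟩⟩
      loopless := ⟨fun p h => h.1 rfl⟩ } with hpat
  by_contra hcon
  push Not at hcon
  apply hnot
  have hall : ∀ A : SimpleGraph (Fin r × Fin m), ∀ᵐ x ∂(piMu (Fin r × Fin m)),
      pat x = A → ∃ f : Fin r → Fin m, (fun i => x (i, f i)) ∉ E := by
    intro A
    obtain ⟨F, hF, hFn⟩ := hcon A
    have hkm := meas_pprod P (meas_kern F hgr.2.1)
    have hkb := pprod_mem P (kern_mem F hgr.2.2)
    have hIntg : Integrable (pprod P (kern F W)) (piMu (Fin r × Fin m)) :=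
      integrable_bdd hkm 1 fun x => by
        rw [abs_of_nonneg (hkb x).1]; exact (hkb x).2
    have hnn : 0 ≤ ∫ x, pprod P (kern F W) x ∂(piMu (Fin r × Fin m)) :=
      integral_nonneg fun x => (hkb x).1
    have hz : ∫ x, pprod P (kern F W) x ∂(piMu (Fin r × Fin m)) = 0 := by
      by_contra hne
      exact hFn (inQ_of_sample hQ hW P hP hcov F (lt_of_le_of_ne hnn (Ne.symm hne)))
    rw [integral_eq_zero_iff_of_nonneg (fun x => (hkb x).1) hIntg] at hz
    filter_upwards [hz] with x hx hpx
    by_contra hno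
    push Not at hno
    have hx0 : pprod P (kern F W) x = 0 := hx
    unfold pprod at hx0
    rw [Finset.prod_eq_zero_iff] at hx0
    obtain ⟨⟨⟨i, a⟩, ⟨j, b⟩⟩, heP, he0⟩ := hx0
    have hne := (hP _ heP).1
    simp only [kern] at he0
    have hmem := hgr.2.2 (x (i, a)) (x (j, b))
    by_cases hij : i = j
    · subst hij
      have h1 : F.Adj (i, a) (i, b) ↔ 0 < W (x (i, a)) (x (i, b)) := by
        rw [hF, ← hpx]
        simp only [hpat]
        exact ⟨fun h => h.2, fun h => ⟨hne, h⟩⟩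
      by_cases hF' : F.Adj (i, a) (i, b)
      · rw [if_pos hF'] at he0
        have := h1.1 hF'
        linarith
      · rw [if_neg hF'] at he0
        have h2 : ¬ 0 < W (x (i, a)) (x (i, b)) := fun h => hF' (h1.2 h)
        linarith
    · have h1 := hEiff _ (hno (fun k => if k = i then a else b)) i j hij
      simp only [if_true, Ne.symm hij, if_false] at h1
      split_ifs at he0
      · linarith [h1.1]
      · linarith [h1.2]
  have := ae_all_iff.2 hall
  filter_upwards [this] with x hx
  exact hx _ rfl

/-- the class contains every graph with homogeneous parts of type `τ` and part size `n`. -/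
def Rich (Q : GraphClass) (r n : ℕ) (τ : Fin r → Prop) : Prop :=
  ∀ F : SimpleGraph (Fin r × Fin n),
      (∀ i a b, a ≠ b → (F.Adj (i, a) (i, b) ↔ τ i)) → InQ Q F

lemma inQ_extend {Q : GraphClass} {r n m : ℕ} (e : Fin r → Fin n → Fin m)
    (he : ∀ i, Function.Injective (e i)) (A : SimpleGraph (Fin r × Fin m))
    (hA : ∀ F : SimpleGraph (Fin r × Fin m),
      (∀ i a b, F.Adj (i, a) (i, b) ↔ A.Adj (i, a) (i, b)) → InQ Q F)
    (F : SimpleGraph (Fin r × Fin n))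
    (hF : ∀ i a b, F.Adj (i, a) (i, b) ↔ A.Adj (i, e i a) (i, e i b)) : InQ Q F := by
  set g : Fin r × Fin n → Fin r × Fin m := fun p => (p.1, e p.1 p.2) with hg
  have hginj : Function.Injective g := by
    rintro ⟨i, a⟩ ⟨j, b⟩ h
    simp only [hg, Prod.mk.injEq] at h
    obtain ⟨rfl, h⟩ := h
    rw [he i h]
  set F' : SimpleGraph (Fin r × Fin m) :=
    { Adj := fun p q => (p.1 = q.1 ∧ A.Adj p q) ∨ (p.1 ≠ q.1 ∧ (F.map g).Adj p q)
      symm := ⟨fun p q h => by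
        rcases h with h | h
        · exact Or.inl ⟨h.1.symm, h.2.symm⟩
        · exact Or.inr ⟨h.1.symm, h.2.symm⟩⟩
      loopless := ⟨fun p h => by
        rcases h with h | h
        · exact A.irrefl h.2
        · exact h.1 rfl⟩ } with hF'
  have h1 : InQ Q F' := hA F' (fun i a b => by simp [hF'])
  have h2 : F = F'.comap g := by
    ext ⟨i, a⟩ ⟨j, b⟩
    simp only [SimpleGraph.comap_adj, hF']
    by_cases hij : i = j
    · subst hij
      simp only [hg, ne_eq, not_true_eq_false, false_and, or_false, true_and]
      exact hF i a b
    · have : (g (i, a)).1 ≠ (g (j, b)).1 := hij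
      simp only [this, false_and, false_or, ne_eq, not_false_eq_true, true_and]
      exact (SimpleGraph.map_adj_apply (G := F) (f := ⟨g, hginj⟩)).symm
  rw [h2]
  exact h1.comap g hginj

lemma exists_rich {Q : GraphClass} (hQ : IsHereditary Q) {W : ℝ → ℝ → ℝ} (hW : W ∈ limitSet Q)
    (r : ℕ) (hK : ¬ KFree r (randIndicator W)) (n : ℕ) : ∃ τ, Rich Q r n τ := by
  obtain ⟨m, hm⟩ := ramsey n
  obtain ⟨A, hA⟩ := exists_pattern hQ hW r hK m
  have hm' := fun i : Fin r => hm (A.comap fun a => (i, a))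
  choose e τ he hτ using hm'
  refine ⟨τ, fun F hF => inQ_extend e he A hA F fun i a b => ?_⟩
  by_cases hab : a = b
  · subst hab; simp
  · rw [hF i a b hab, ← hτ i a b hab]; simp

lemma Rich.mono {Q : GraphClass} {r n n' : ℕ} (h : n' ≤ n) {τ : Fin r → Prop}
    (hR : Rich Q r n τ) : Rich Q r n' τ := by
  intro F hF
  refine inQ_extend (fun _ => Fin.castLE h) (fun _ => Fin.castLE_injective h)
    { Adj := fun p q => p ≠ q ∧ p.1 = q.1 ∧ τ p.1
      symm := ⟨fun p q h => ⟨h.1.symm, h.2.1.symm, h.2.1 ▸ h.2.2⟩⟩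
      loopless := ⟨fun p h => h.1 rfl⟩ } (fun F hF => hR F fun i a b hab => ?_) F fun i a b => ?_
  · rw [hF]; simp [hab]
  · by_cases hab : a = b
    · subst hab; simp
    · rw [hF i a b hab]; simp [hab]

lemma exists_rich_all {Q : GraphClass} (hQ : IsHereditary Q) {W : ℝ → ℝ → ℝ} (hW : W ∈ limitSet Q)
    (r : ℕ) (hK : ¬ KFree r (randIndicator W)) : ∃ τ, ∀ n, Rich Q r n τ := by
  classical
  by_contra hcon
  push Not at hcon
  choose N hN using hcon
  obtain ⟨τ, hτ⟩ := exists_rich hQ hW r hK (∑ τ, N τ)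
  exact hN τ (hτ.mono (Finset.single_le_sum (f := N) (fun _ _ => Nat.zero_le _) (Finset.mem_univ τ)))

lemma exists_perm (r : ℕ) (τ : Fin r → Prop) :
    ∃ (s : ℕ) (π : Equiv.Perm (Fin r)), s ≤ r ∧ ∀ i, τ (π i) ↔ (i : ℕ) < s := by
  classical
  set s := Fintype.card {i // τ i} with hs
  have hsr : s ≤ r := by
    simpa using Fintype.card_subtype_le τ
  have hc : Fintype.card {i : Fin r // (i : ℕ) < s} = Fintype.card {i // τ i} := by
    rw [Fintype.card_subtype, ← hs]
    have : (Finset.univ.filter fun i : Fin r => (i : ℕ) < s) =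
        Finset.univ.map (Fin.castLEEmb hsr) := by
      ext i
      simp only [Finset.mem_filter, Finset.mem_univ, true_and, Finset.mem_map]
      constructor
      · intro h; exact ⟨⟨i, h⟩, by ext; simp⟩
      · rintro ⟨k, hk⟩; rw [← hk]; simp
    rw [this]; simp
  have e := Fintype.equivOfCardEq hc
  refine ⟨s, e.extendSubtype, hsr, fun i => ?_⟩
  constructor
  · intro h
    by_contra hcon
    exact e.extendSubtype_not_mem i hcon h
  · intro h
    exact e.extendSubtype_mem i h

lemma exists_rich_std {Q : GraphClass} (hQ : IsHereditary Q) {W : ℝ → ℝ → ℝ} (hW : W ∈ limitSet Q)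
    (r : ℕ) (hK : ¬ KFree r (randIndicator W)) :
    ∃ s, s ≤ r ∧ ∀ n, Rich Q r n (fun i => (i : ℕ) < s) := by
  obtain ⟨τ, hτ⟩ := exists_rich_all hQ hW r hK
  obtain ⟨s, π, hs, hπ⟩ := exists_perm r τ
  refine ⟨s, hs, fun n F hF => ?_⟩
  set g : Fin r × Fin n → Fin r × Fin n := fun p => (π p.1, p.2) with hg
  have hginj : Function.Injective g := by
    rintro ⟨i, a⟩ ⟨j, b⟩ h
    simp only [hg, Prod.mk.injEq, EmbeddingLike.apply_eq_iff_eq] at h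
    rw [h.1, h.2]
  set F' := F.comap (fun p : Fin r × Fin n => (π.symm p.1, p.2)) with hF'
  have h1 : InQ Q F' := hτ n F' fun i a b hab => by
    rw [hF', SimpleGraph.comap_adj, hF _ _ _ hab]
    show ((π.symm i : Fin r) : ℕ) < s ↔ τ i
    rw [← hπ]; simp
  have h2 : F = F'.comap g := by
    ext p q
    simp [hF', hg]
  rw [h2]
  exact h1.comap g hginj

lemma hadamard (k : ℕ) : ∃ H : Fin (4^k) → Fin (4^k) → ℝ, (∀ a b, H a b = H b a) ∧
    (∀ a b, H a b = 1 ∨ H a b = -1) ∧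
    ∀ a b, ∑ c, H a c * H b c = if a = b then (4:ℝ)^k else 0 := by
  induction k with
  | zero =>
    refine ⟨fun _ _ => 1, by simp, by simp, fun a b => ?_⟩
    have : a = b := by
      ext; have := a.2; have := b.2; simp at *
    subst this
    simp
  | succ k ih =>
    obtain ⟨H, h1, h2, h3⟩ := ih
    have hc : 4 * 4^k = 4^(k+1) := by ring
    set e : Fin (4^(k+1)) ≃ Fin 4 × Fin (4^k) := (finCongr hc.symm).trans finProdFinEquiv.symm with he
    set K : Fin 4 → Fin 4 → ℝ := fun i j => if i = j then -1 else 1 with hK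
    have hK1 : ∀ i j, K i j = K j i := by
      intro i j; simp only [hK, eq_comm]
    have hK2 : ∀ i j, K i j = 1 ∨ K i j = -1 := by
      intro i j; simp only [hK]; split_ifs <;> simp
    have hK3 : ∀ i j, ∑ c, K i c * K j c = if i = j then 4 else 0 := by
      intro i j
      fin_cases i <;> fin_cases j <;> simp [hK, Fin.sum_univ_four] <;> norm_num
    refine ⟨fun a b => K (e a).1 (e b).1 * H (e a).2 (e b).2, ?_, ?_, ?_⟩
    · intro a b; simp only [hK1 (e a).1, h1 (e a).2]
    · intro a b
      rcases hK2 (e a).1 (e b).1 with h | h <;> rcases h2 (e a).2 (e b).2 with h' | h' <;>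
        simp [h, h']
    · intro a b
      rw [← Equiv.sum_comp e.symm, Fintype.sum_prod_type]
      have : ∀ i c, K (e a).1 (e (e.symm (i, c))).1 * H (e a).2 (e (e.symm (i, c))).2 *
          (K (e b).1 (e (e.symm (i, c))).1 * H (e b).2 (e (e.symm (i, c))).2) =
          (K (e a).1 i * K (e b).1 i) * (H (e a).2 c * H (e b).2 c) := by
        intro i c; rw [Equiv.apply_symm_apply]; ring
      simp_rw [this]
      simp_rw [← Finset.mul_sum, ← Finset.sum_mul]
      rw [hK3, h3]
      by_cases hab : a = b
      · subst hab; simp; ring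
      · rw [if_neg hab]
        by_cases h : (e a).1 = (e b).1
        · have : (e a).2 ≠ (e b).2 := fun h' => hab (e.injective (Prod.ext h h'))
          simp [this]
        · simp [h]

lemma lindsey (k : ℕ) (H : Fin (4^k) → Fin (4^k) → ℝ)
    (h3 : ∀ a b, ∑ c, H a c * H b c = if a = b then (4:ℝ)^k else 0) (δ : ℝ)
    (s t : Fin (4^k) → ℝ) (hs : ∀ a, s a ∈ Icc 0 δ) (ht : ∀ a, t a ∈ Icc 0 δ) :
    |∑ a, ∑ b, s a * t b * H a b| ≤ 2^k * 4^k * δ^2 := by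
  have hsq : ∀ s : Fin (4^k) → ℝ, (∀ a, s a ∈ Icc 0 δ) → ∑ a, s a ^ 2 ≤ 4^k * δ^2 := by
    intro s hs
    calc ∑ a, s a ^ 2 ≤ ∑ a : Fin (4^k), δ^2 :=
          Finset.sum_le_sum fun a _ => pow_le_pow_left₀ (hs a).1 (hs a).2 2
      _ = _ := by simp
  have e1 : ∑ a, ∑ b, s a * t b * H a b = ∑ b, t b * ∑ a, s a * H a b := by
    rw [Finset.sum_comm]
    refine Finset.sum_congr rfl fun b _ => ?_
    rw [Finset.mul_sum]
    exact Finset.sum_congr rfl fun a _ => by ring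
  have e2 : ∑ b, (∑ a, s a * H a b)^2 = 4^k * ∑ a, s a ^2 := by
    have : ∀ b, (∑ a, s a * H a b)^2 = ∑ a, ∑ a', s a * s a' * (H a b * H a' b) := by
      intro b
      rw [sq, Finset.sum_mul_sum]
      exact Finset.sum_congr rfl fun a _ => Finset.sum_congr rfl fun a' _ => by ring
    simp_rw [this]
    rw [Finset.sum_comm, Finset.mul_sum]
    refine Finset.sum_congr rfl fun a _ => ?_
    rw [Finset.sum_comm]
    simp_rw [← Finset.mul_sum, h3]
    simp
    ring
  have cs := Finset.sum_mul_sq_le_sq_mul_sq Finset.univ t (fun b => ∑ a, s a * H a b)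
  rw [e1]
  apply abs_le_of_sq_le_sq _ (by positivity)
  refine cs.trans ?_
  rw [e2]
  have p4 : (4:ℝ)^k = 2^k*2^k := by rw [← mul_pow]; norm_num
  calc (∑ a, t a ^2) * (4^k * ∑ a, s a ^2) ≤ (4^k * δ^2) * (4^k * (4^k * δ^2)) := by
        apply mul_le_mul (hsq t ht) _ (by positivity) (by positivity)
        exact mul_le_mul_of_nonneg_left (hsq s hs) (by positivity)
    _ = _ := by rw [p4]; ring

lemma cutNorm_le_step {N : ℕ} (hN : 0 < N) (U : ℝ → ℝ → ℝ) (c : Fin N → Fin N → ℝ)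
    (hU : ∀ x ∈ Ioc (0:ℝ) 1, ∀ y ∈ Ioc (0:ℝ) 1, U x y = c (cell N hN x) (cell N hN y))
    (ε : ℝ) (h : ∀ s t : Fin N → ℝ, (∀ u, s u ∈ Icc (0:ℝ) (1/N)) → (∀ u, t u ∈ Icc (0:ℝ) (1/N)) →
      |∑ u, ∑ v, s u * t v * c u v| ≤ ε) : cutNorm U ≤ ε := by
  unfold cutNorm
  refine csSup_le ⟨_, ∅, ∅, MeasurableSet.empty, MeasurableSet.empty, by simp, by simp, rfl⟩ ?_
  rintro _ ⟨S, T, hS, hT, hS1, hT1, rfl⟩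
  have hp := prod_mu_restrict hS hT
  rw [inter_eq_left.2 hS1, inter_eq_left.2 hT1] at hp
  rw [← hp]
  have hae : ∀ᵐ q ∂((mu.restrict S).prod (mu.restrict T)),
      U q.1 q.2 = c (cell N hN q.1) (cell N hN q.2) := by
    rw [Measure.prod_restrict]
    filter_upwards [ae_restrict_of_ae (ae_prod_of_ae ae_Ioc)] with q hq
    exact hU _ hq.1 _ hq.2
  rw [integral_congr_ae hae]
  have hi : Integrable (fun p : ℝ × ℝ => c (cell N hN p.1) (cell N hN p.2))
      ((mu.restrict S).prod (mu.restrict T)) := by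
    refine integrable_bdd (meas_step hN c) (∑ u, ∑ v, |c u v|) fun p => ?_
    refine le_trans ?_ (Finset.single_le_sum (f := fun u => ∑ v, |c u v|)
      (fun _ _ => Finset.sum_nonneg fun _ _ => abs_nonneg _) (Finset.mem_univ (cell N hN p.1)))
    exact Finset.single_le_sum (f := fun v => |c (cell N hN p.1) v|)
      (fun _ _ => abs_nonneg _) (Finset.mem_univ (cell N hN p.2))
  rw [integral_prod _ hi, step_int2]
  have hb : ∀ (S : Set ℝ) (u : Fin N), (mu.restrict S).real (cell N hN ⁻¹' {u}) ∈ Icc (0:ℝ) (1/N) := by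
    intro S u
    refine ⟨measureReal_nonneg, ?_⟩
    rw [← mu_cell hN u]
    exact ENNReal.toReal_mono (measure_ne_top _ _) (Measure.restrict_apply_le _ _)
  exact h _ _ (hb S) (hb T)

open Classical in
def wstep (r s : ℕ) (i j : Fin r) : ℝ := if i ≠ j then 1/2 else if (i:ℕ) < s then 1 else 0

lemma Wrs_cell {r : ℕ} (hr : 0 < r) (s : ℕ) {x y : ℝ} (hx : x ∈ Ioc (0:ℝ) 1) (hy : y ∈ Ioc (0:ℝ) 1) :
    Wrs r s x y = wstep r s (cell r hr x) (cell r hr y) := by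
  unfold Wrs wstep
  simp_rw [mem_Ioc_iff_cell hr hx, mem_Ioc_iff_cell hr hy]
  have e1 : (∃ i j : Fin r, i ≠ j ∧ cell r hr x = i ∧ cell r hr y = j) ↔
      cell r hr x ≠ cell r hr y := by
    constructor
    · rintro ⟨i, j, h, rfl, rfl⟩; exact h
    · intro h; exact ⟨_, _, h, rfl, rfl⟩
  by_cases h : cell r hr x = cell r hr y
  · have e2 : (∃ i : Fin r, (i:ℕ) < s ∧ cell r hr x = i ∧ cell r hr y = i) ↔
        (cell r hr x : ℕ) < s := by
      constructor
      · rintro ⟨i, h, rfl, _⟩; exact h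
      · intro h'; exact ⟨_, h', rfl, h.symm⟩
    simp only [e1, e2]
  · rw [if_pos (e1.2 h), if_pos h]

lemma isGraphon_Wrs (r s : ℕ) : IsGraphon (Wrs r s) := by
  refine ⟨fun x y => ?_, ?_, fun x y => ?_⟩
  · unfold Wrs
    congr 1
    · apply propext
      constructor <;> rintro ⟨i, j, h, h1, h2⟩ <;> exact ⟨j, i, h.symm, h2, h1⟩
    · congr 1
      apply propext
      constructor <;> rintro ⟨i, h, h1, h2⟩ <;> exact ⟨i, h, h2, h1⟩
  · unfold Wrs Function.uncurry
    refine Measurable.ite ?_ measurable_const (Measurable.ite ?_ measurable_const measurable_const)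
    · simp only [ofPred_exists, ofPred_and]
      refine MeasurableSet.iUnion fun i => MeasurableSet.iUnion fun j => ?_
      exact (MeasurableSet.const _).inter
        ((measurable_fst measurableSet_Ioc).inter (measurable_snd measurableSet_Ioc))
    · simp only [ofPred_exists, ofPred_and]
      refine MeasurableSet.iUnion fun i => ?_
      exact (MeasurableSet.const _).inter
        ((measurable_fst measurableSet_Ioc).inter (measurable_snd measurableSet_Ioc))
  · unfold Wrs
    split_ifs <;> norm_num

lemma cell_div {r n : ℕ} (hr : 0 < r) (hn : 0 < n) (hN : 0 < r * n) {x : ℝ} (hx : x ∈ Ioc (0:ℝ) 1) :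
    cell r hr x = (finProdFinEquiv.symm (cell (r*n) hN x)).1 := by
  have hn' : (0:ℝ) < n := by exact_mod_cast hn
  set u := cell (r*n) hN x with hu
  rw [← cell_eq_iff hr hx]
  have h := (cell_eq_iff hN hx u).2 rfl
  rw [Int.ceil_eq_iff] at h ⊢
  have h1 : n * ((finProdFinEquiv.symm u).1 : ℕ) ≤ (u:ℕ) := by
    simpa [Fin.divNat, mul_comm] using Nat.div_mul_le_self (u:ℕ) n
  have h2 : (u:ℕ) + 1 ≤ n * (((finProdFinEquiv.symm u).1 : ℕ) + 1) := by
    have := Nat.lt_mul_div_succ (u:ℕ) hn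
    simpa [Fin.divNat] using this
  have h1' : (n:ℝ) * ((finProdFinEquiv.symm u).1 : ℕ) ≤ (u:ℕ) := by exact_mod_cast h1
  have h2' : ((u:ℕ):ℝ) + 1 ≤ n * (((finProdFinEquiv.symm u).1 : ℕ) + 1) := by exact_mod_cast h2
  push_cast at h ⊢
  constructor
  · have : (n:ℝ) * ((finProdFinEquiv.symm u).1 : ℕ) < n * (r * x) := by nlinarith [h.1]
    have := lt_of_mul_lt_mul_left this hn'.le
    linarith
  · have : (n:ℝ) * (r * x) ≤ n * (((finProdFinEquiv.symm u).1 : ℕ) + 1) := by nlinarith [h.2]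
    exact le_of_mul_le_mul_left this hn'


open Classical in
lemma cut_bound (r s k : ℕ) (hr : 0 < r) (H : Fin (4^k) → Fin (4^k) → ℝ)
    (h2 : ∀ a b, H a b = 1 ∨ H a b = -1)
    (h3 : ∀ a b, ∑ c, H a c * H b c = if a = b then (4:ℝ)^k else 0)
    (F : SimpleGraph (Fin r × Fin (4^k)))
    (hF : ∀ p q, F.Adj p q ↔ (p.1 ≠ q.1 ∧ H p.2 q.2 = 1) ∨ (p.1 = q.1 ∧ p.2 ≠ q.2 ∧ (p.1:ℕ) < s)) :
    cutNorm (fun x y => graphonOfGraph (F.comap (finProdFinEquiv (m := r) (n := 4^k)).symm) x y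
      - Wrs r s x y) ≤ 2 / 2^k := by
  have hn : 0 < 4^k := by positivity
  have hN : 0 < r * 4^k := by positivity
  have hr' : (1:ℝ) ≤ r := by exact_mod_cast hr
  set e := (finProdFinEquiv (m := r) (n := 4^k)).symm with he
  set d : Fin r × Fin (4^k) → Fin r × Fin (4^k) → ℝ := fun p q =>
    (if p.1 = q.1 then 0 else (1/2) * H p.2 q.2) - (if p = q ∧ (p.1:ℕ) < s then 1 else 0) with hd
  refine cutNorm_le_step hN _ (fun u v => d (e u) (e v)) ?_ _ ?_
  · intro x hx y hy
    rw [graphonOfGraph_cell hN _ hx hy, Wrs_cell hr s hx hy, cell_div hr hn hN hx,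
      cell_div hr hn hN hy]
    rw [SimpleGraph.comap_adj, hF, ← he]
    generalize e (cell (r*4^k) hN x) = p
    generalize e (cell (r*4^k) hN y) = q
    obtain ⟨i, a⟩ := p
    obtain ⟨j, b⟩ := q
    simp only [hd, wstep]
    by_cases hij : i = j
    · subst hij
      by_cases hab : a = b
      · subst hab; simp
      · by_cases hs : (i:ℕ) < s <;> simp [hab, hs]
    · rcases h2 a b with h | h <;> simp [hij, h] <;> norm_num
  · intro σ τ hσ hτ
    set δ : ℝ := 1 / ((r * 4^k : ℕ) : ℝ) with hδ
    have hδ0 : 0 ≤ δ := by positivity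
    have p4 : (4:ℝ)^k = 2^k*2^k := by rw [← mul_pow]; norm_num
    have hrδ : r * 4^k * δ = 1 := by
      rw [hδ]; push_cast; field_simp
    have hsum : ∑ u, ∑ v, σ u * τ v * d (e u) (e v) =
        ∑ p, ∑ q, σ (e.symm p) * τ (e.symm q) * d p q := by
      rw [← Equiv.sum_comp e.symm]
      refine Finset.sum_congr rfl fun p _ => ?_
      rw [← Equiv.sum_comp e.symm]
      simp
    rw [hsum]
    have hsplit : ∑ p, ∑ q, σ (e.symm p) * τ (e.symm q) * d p q =
        (∑ i, ∑ j, if i = j then 0 else (1/2) * ∑ a, ∑ b, σ (e.symm (i,a)) * τ (e.symm (j,b)) * H a b)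
        - ∑ p : Fin r × Fin (4^k), if (p.1:ℕ) < s then σ (e.symm p) * τ (e.symm p) else 0 := by
      simp only [hd, mul_sub, Finset.sum_sub_distrib]
      congr 1
      · rw [Fintype.sum_prod_type]
        refine Finset.sum_congr rfl fun i _ => ?_
        simp_rw [Fintype.sum_prod_type]
        rw [Finset.sum_comm]
        refine Finset.sum_congr rfl fun j _ => ?_
        split_ifs
        · simp
        · rw [Finset.mul_sum]
          refine Finset.sum_congr rfl fun a _ => ?_
          rw [Finset.mul_sum]
          exact Finset.sum_congr rfl fun b _ => by ring
      · refine Finset.sum_congr rfl fun p _ => ?_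
        rw [Finset.sum_eq_single p]
        · simp
        · intro q _ hq
          simp [hq.symm]
        · simp
    rw [hsplit]
    have b1 : |∑ i : Fin r, ∑ j : Fin r, if i = j then 0 else
        (1/2) * ∑ a, ∑ b, σ (e.symm (i,a)) * τ (e.symm (j,b)) * H a b| ≤
        ∑ i : Fin r, ∑ j : Fin r, 2^k * 4^k * δ^2 := by
      refine (Finset.abs_sum_le_sum_abs _ _).trans (Finset.sum_le_sum fun i _ => ?_)
      refine (Finset.abs_sum_le_sum_abs _ _).trans (Finset.sum_le_sum fun j _ => ?_)
      split_ifs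
      · rw [abs_zero]; positivity
      · rw [abs_mul]
        have := lindsey k H h3 δ (fun a => σ (e.symm (i,a))) (fun b => τ (e.symm (j,b)))
          (fun a => hσ _) (fun b => hτ _)
        have h12 : |(1/2:ℝ)| = 1/2 := by norm_num
        rw [h12]
        nlinarith [abs_nonneg (∑ a, ∑ b, σ (e.symm (i,a)) * τ (e.symm (j,b)) * H a b)]
    have b2 : |∑ p : Fin r × Fin (4^k), if (p.1:ℕ) < s then σ (e.symm p) * τ (e.symm p) else 0| ≤
        ∑ p : Fin r × Fin (4^k), δ^2 := by
      refine (Finset.abs_sum_le_sum_abs _ _).trans (Finset.sum_le_sum fun p _ => ?_)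
      split_ifs
      · have h1 := hσ (e.symm p)
        have h2 := hτ (e.symm p)
        rw [abs_of_nonneg (mul_nonneg h1.1 h2.1), sq]
        exact mul_le_mul h1.2 h2.2 h2.1 hδ0
      · rw [abs_zero]; positivity
    refine (abs_sub _ _).trans ((add_le_add b1 b2).trans ?_)
    simp only [Finset.sum_const, Finset.card_univ, Fintype.card_fin, Fintype.card_prod, nsmul_eq_mul]
    push_cast
    have hpos : (0:ℝ) < 2^k := by positivity
    have hone : (1:ℝ) ≤ 2^k := one_le_pow₀ (by norm_num)
    have e1 : (r:ℝ) * (r * (2^k * 4^k * δ^2)) = 1 / 2^k := by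
      have : (r:ℝ) * (r * (2^k * 4^k * δ^2)) = (r * 4^k * δ)^2 * (2^k / 4^k) := by
        field_simp
      rw [this, hrδ, p4]; field_simp
    have e2 : (r:ℝ) * 4^k * δ^2 ≤ 1 / 2^k := by
      have : (r:ℝ) * 4^k * δ^2 = δ := by
        rw [sq, ← mul_assoc, hrδ, one_mul]
      rw [this, hδ]
      apply one_div_le_one_div_of_le hpos
      push_cast
      rw [p4]
      nlinarith [mul_le_mul hr' hone zero_le_one (by positivity)]
    rw [e1]
    calc _ ≤ 1 / (2:ℝ)^k + 1/2^k := by gcongr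
      _ = _ := by ring

open Classical in
lemma Wrs_mem {Q : GraphClass} {r s : ℕ} (hr : 0 < r)
    (h : ∀ n, Rich Q r n (fun i => (i:ℕ) < s)) : Wrs r s ∈ limitSet Q := by
  refine ⟨isGraphon_Wrs r s, ?_⟩
  choose H h1 h2 h3 using hadamard
  set F : ∀ k, SimpleGraph (Fin r × Fin (4^k)) := fun k =>
    { Adj := fun p q => (p.1 ≠ q.1 ∧ H k p.2 q.2 = 1) ∨ (p.1 = q.1 ∧ p.2 ≠ q.2 ∧ (p.1:ℕ) < s)
      symm := ⟨fun p q h => by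
        rcases h with h | h
        · exact Or.inl ⟨h.1.symm, by rw [h1]; exact h.2⟩
        · exact Or.inr ⟨h.1.symm, h.2.1.symm, h.1 ▸ h.2.2⟩⟩
      loopless := ⟨fun p h => by
        rcases h with h | h
        · exact h.1 rfl
        · exact h.2.1 rfl⟩ } with hF
  refine ⟨fun k => r * 4^k, fun k => (F k).comap finProdFinEquiv.symm, fun k => ?_, ?_, ?_⟩
  · refine h (4^k) (F k) (fun i a b hab => ?_) _ _ finProdFinEquiv.symm.injective
    simp [hF, hab]
  · refine tendsto_atTop_mono (fun k => ?_) tendsto_id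
    have : k < 4^k := Nat.lt_pow_self (by norm_num)
    show k ≤ r * 4^k
    nlinarith
  · have hlim : Tendsto (fun k : ℕ => (2:ℝ) / 2^k) atTop (nhds 0) := by
      have := (tendsto_pow_atTop_nhds_zero_of_lt_one (r := (1/2:ℝ)) (by norm_num) (by norm_num)).const_mul 2
      simpa [div_eq_mul_inv] using this
    refine squeeze_zero (fun k => deltaCut_nonneg _ _) (fun k => ?_) hlim
    exact (deltaCut_le _ _).trans (cut_bound r s k hr (H k) (h2 k) (h3 k) (F k) fun p q => Iff.rfl)

lemma binEnt_eq (x : ℝ) : binEnt x = Real.binEntropy x / Real.log 2 := by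
  unfold binEnt Real.logb
  rw [Real.binEntropy_eq_negMulLog_add_negMulLog_one_sub]
  unfold Real.negMulLog
  ring

lemma log_two_pos' : 0 < Real.log 2 := Real.log_pos (by norm_num)

lemma binEnt_half : binEnt (1/2) = 1 := by
  rw [binEnt_eq, one_div, Real.binEntropy_two_inv, div_self log_two_pos'.ne']

lemma binEnt_zero : binEnt 0 = 0 := by simp [binEnt_eq]
lemma binEnt_one : binEnt 1 = 0 := by simp [binEnt_eq]

lemma binEnt_le_one (x : ℝ) : binEnt x ≤ 1 := by
  rw [binEnt_eq, div_le_one log_two_pos']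
  exact Real.binEntropy_le_log_two

lemma binEnt_nonneg {x : ℝ} (hx : x ∈ Icc (0:ℝ) 1) : 0 ≤ binEnt x := by
  rw [binEnt_eq]
  exact div_nonneg (Real.binEntropy_nonneg hx.1 hx.2) log_two_pos'.le

lemma binEnt_meas : Measurable binEnt := by
  have : binEnt = fun x => Real.binEntropy x / Real.log 2 := funext binEnt_eq
  rw [this]
  exact (Real.binEntropy_continuous.div_const _).measurable

lemma ent_Wrs {r : ℕ} (hr : 0 < r) (s : ℕ) : graphonEnt (Wrs r s) = 1 - 1 / (r:ℝ) := by
  have hr' : (0:ℝ) < r := by exact_mod_cast hr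
  have h1 : graphonEnt (Wrs r s) =
      ∫ x, ∫ y, (fun i j : Fin r => binEnt (wstep r s i j)) (cell r hr x) (cell r hr y) ∂mu ∂mu := by
    unfold graphonEnt
    refine integral_congr_ae ?_
    filter_upwards [ae_Ioc] with x hx
    refine integral_congr_ae ?_
    filter_upwards [ae_Ioc] with y hy
    rw [Wrs_cell hr s hx hy]
  rw [h1, step_int2 hr (fun i j : Fin r => binEnt (wstep r s i j)) mu mu]
  simp_rw [mu_cell hr]
  have h2 : ∀ i j : Fin r, binEnt (wstep r s i j) = 1 - if i = j then 1 else 0 := by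
    intro i j
    unfold wstep
    by_cases hij : i = j
    · by_cases hs : (i:ℕ) < s <;> simp [hij, binEnt_zero, binEnt_one]
      split_ifs <;> simp [binEnt_zero, binEnt_one]
      split_ifs <;> simp [binEnt_zero, binEnt_one]
    · simp only [ne_eq, hij, not_false_eq_true, if_true, binEnt_half]; simp
  simp_rw [h2, mul_sub, Finset.sum_sub_distrib]
  simp
  field_simp

lemma randIndicator_meas {W : ℝ → ℝ → ℝ} (hW : Measurable (Function.uncurry W)) :
    Measurable (Function.uncurry (randIndicator W)) := by
  unfold randIndicator Function.uncurry
  refine Measurable.ite ?_ measurable_const measurable_const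
  exact (measurableSet_lt measurable_const hW).inter (measurableSet_lt hW measurable_const)

lemma randIndicator_mem (W : ℝ → ℝ → ℝ) (x y : ℝ) : randIndicator W x y ∈ Icc (0:ℝ) 1 := by
  unfold randIndicator; split_ifs <;> simp

lemma abs_le_of_Icc {a : ℝ} (h : a ∈ Icc (0:ℝ) 1) : |a| ≤ 1 := by
  rw [abs_of_nonneg h.1]; exact h.2

lemma ent_le {W : ℝ → ℝ → ℝ} (hW : IsGraphon W) :
    graphonEnt W ≤ ∫ q, randIndicator W q.1 q.2 ∂(mu.prod mu) := by
  have hm : Measurable fun q : ℝ × ℝ => binEnt (W q.1 q.2) := binEnt_meas.comp hW.2.1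
  have hi : Integrable (fun q : ℝ × ℝ => binEnt (W q.1 q.2)) (mu.prod mu) :=
    integrable_bdd hm 1 fun q => abs_le_of_Icc ⟨binEnt_nonneg (hW.2.2 _ _), binEnt_le_one _⟩
  have h1 : graphonEnt W = ∫ q, binEnt (W q.1 q.2) ∂(mu.prod mu) := (integral_prod _ hi).symm
  rw [h1]
  refine integral_mono hi
    (integrable_bdd (randIndicator_meas hW.2.1) 1 fun q => abs_le_of_Icc (randIndicator_mem _ _ _)) ?_
  intro q
  show binEnt (W q.1 q.2) ≤ randIndicator W q.1 q.2
  unfold randIndicator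
  split_ifs with h
  · exact binEnt_le_one _
  · have := hW.2.2 q.1 q.2
    rcases eq_or_lt_of_le this.1 with h0 | h0
    · rw [← h0, binEnt_zero]
    · rcases eq_or_lt_of_le this.2 with h1 | h1
      · rw [h1, binEnt_one]
      · exact absurd ⟨h0, h1⟩ h

open Classical in
lemma turan_real {r n : ℕ} (G : SimpleGraph (Fin n)) (h : G.CliqueFree (r+1)) :
    (r:ℝ) * ∑ i, ∑ j, (if G.Adj i j then (1:ℝ) else 0) ≤ ((r - 1 : ℕ):ℝ) * n^2 := by
  have h1 := h.card_edgeFinset_le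
  simp only [Fintype.card_fin] at h1
  rw [← SimpleGraph.card_edgeFinset_turanGraph] at h1
  have h2 := SimpleGraph.mul_card_edgeFinset_turanGraph_le (n := n) (r := r)
  have h3 : 2 * r * G.edgeFinset.card ≤ (r-1) * n^2 := le_trans (Nat.mul_le_mul_left _ h1) h2
  have h4 : ∑ i, ∑ j, (if G.Adj i j then (1:ℝ) else 0) = ((2 * G.edgeFinset.card : ℕ) : ℝ) := by
    rw [← SimpleGraph.sum_degrees_eq_twice_card_edges]
    push_cast
    refine Finset.sum_congr rfl fun i _ => ?_
    rw [← SimpleGraph.card_neighborFinset_eq_degree, SimpleGraph.neighborFinset_eq_filter]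
    simp
  rw [h4]
  have h5 : r * (2 * G.edgeFinset.card) ≤ (r-1) * n^2 := by
    calc _ = 2 * r * G.edgeFinset.card := by ring
      _ ≤ _ := h3
  exact_mod_cast h5

open Classical in
lemma turan_graphon {W : ℝ → ℝ → ℝ} (hW : IsGraphon W) {r : ℕ} (hr : 1 ≤ r)
    (hK : KFree (r+1) (randIndicator W)) :
    ∫ q, randIndicator W q.1 q.2 ∂(mu.prod mu) ≤ 1 - 1 / (r:ℝ) := by
  have hr' : (0:ℝ) < r := by exact_mod_cast hr
  set ρ := ∫ q, randIndicator W q.1 q.2 ∂(mu.prod mu) with hρ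
  rw [kfree_iff] at hK
  have hm := randIndicator_meas hW.2.1
  have key : ∀ n : ℕ, (r:ℝ) * (n * (n - 1) * ρ) ≤ (r - 1) * n^2 := by
    intro n
    have hae : ∀ᵐ x ∂(piMu (Fin n)), ∀ f : Fin (r+1) ↪ Fin n,
        (∏ i : Fin (r+1), ∏ j : Fin (r+1), if i < j then randIndicator W (x (f i)) (x (f j)) else 1) = 0 := by
      rw [ae_all_iff]
      intro f
      exact (mp_comp f f.injective).quasiMeasurePreserving.ae hK
    have hi : ∀ i j : Fin n, Integrable (fun x : Fin n → ℝ =>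
        if i ≠ j then randIndicator W (x i) (x j) else 0) (piMu (Fin n)) := by
      intro i j
      split_ifs with h
      · have hmm : Measurable fun x : Fin n → ℝ => (x i, x j) := by fun_prop
        exact integrable_bdd (hm.comp hmm) 1 fun x => abs_le_of_Icc (randIndicator_mem _ _ _)
      · exact integrable_zero _ _ _
    have hpt : ∀ᵐ x ∂(piMu (Fin n)), (r:ℝ) * ∑ i : Fin n, ∑ j : Fin n,
        (if i ≠ j then randIndicator W (x i) (x j) else 0) ≤ ((r - 1 : ℕ):ℝ) * n^2 := by
      filter_upwards [hae] with x hx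
      set G : SimpleGraph (Fin n) :=
        { Adj := fun i j => i ≠ j ∧ 0 < W (x i) (x j) ∧ W (x i) (x j) < 1
          symm := ⟨fun i j h => ⟨h.1.symm, by rw [hW.1]; exact h.2⟩⟩
          loopless := ⟨fun i h => h.1 rfl⟩ } with hG
      have hcf : G.CliqueFree (r+1) := by
        by_contra hcon
        rw [SimpleGraph.not_cliqueFree_iff_top_isContained] at hcon
        obtain ⟨f⟩ := hcon
        have h1 := hx ⟨f, f.injective⟩
        refine one_ne_zero (α := ℝ) (h1.symm ▸ ?_)
        symm
        refine Finset.prod_eq_one fun i _ => Finset.prod_eq_one fun j _ => ?_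
        split_ifs with hij
        · have h2 : G.Adj (f i) (f j) := f.toHom.map_adj (show (⊤ : SimpleGraph (Fin (r+1))).Adj i j from hij.ne)
          exact if_pos h2.2
        · rfl
      have := turan_real G hcf
      have heq : ∀ i j, (if i ≠ j then randIndicator W (x i) (x j) else 0) =
          if G.Adj i j then (1:ℝ) else 0 := by
        intro i j
        by_cases hij : i = j <;> simp [hij, hG, randIndicator]
      simp_rw [heq]
      convert this
    have hIntg := integral_mono_ae
      ((integrable_finsetSum _ fun i _ => integrable_finsetSum _ fun j _ => hi i j).const_mul (r:ℝ))
      (integrable_const _) hpt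
    rw [integral_const_mul, integral_finsetSum _ fun i _ => integrable_finsetSum _ fun j _ => hi i j]
      at hIntg
    simp_rw [fun i => integral_finsetSum Finset.univ fun j _ => hi i j] at hIntg
    have hval : ∀ i j : Fin n, ∫ x, (if i ≠ j then randIndicator W (x i) (x j) else 0) ∂(piMu (Fin n))
        = ρ - if i = j then ρ else 0 := by
      intro i j
      by_cases hij : i = j
      · simp [hij]
      · simp only [ne_eq, hij, not_false_eq_true, if_true, if_false, sub_zero]
        have hmp := mp_pair hij
        rw [hρ, ← hmp.map_eq]
        exact (integral_map (f := Function.uncurry (randIndicator W)) hmp.measurable.aemeasurable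
          hm.aestronglyMeasurable).symm
    simp_rw [hval, Finset.sum_sub_distrib] at hIntg
    simp at hIntg
    rw [Nat.cast_sub hr] at hIntg
    push_cast at hIntg
    nlinarith [hIntg]
  by_contra hcon
  push Not at hcon
  have hc : (r:ℝ) - 1 < r * ρ := by
    have := mul_lt_mul_of_pos_left hcon hr'
    rwa [mul_sub, mul_one, mul_one_div_cancel hr'.ne'] at this
  obtain ⟨n, hn⟩ := exists_nat_gt (max 1 (r * ρ / (r*ρ - (r-1))))
  have hn1 : (1:ℝ) < n := lt_of_le_of_lt (le_max_left _ _) hn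
  have hn2 := lt_of_le_of_lt (le_max_right _ _) hn
  rw [div_lt_iff₀ (by linarith)] at hn2
  have := key n
  nlinarith

lemma Wrs_not_kfree {r t : ℕ} (u : ℕ) (h : r < t) : ¬ KFree (r+1) (randIndicator (Wrs t u)) := by
  intro hK
  have ht : 0 < t := by omega
  rw [kfree_iff] at hK
  have hI : ∀ᵐ x ∂(piMu (Fin (r+1))), ∀ i, x i ∈ Ioc (0:ℝ) 1 := by
    rw [ae_all_iff]
    intro i
    exact (measurePreserving_eval (fun _ : Fin (r+1) => mu) i).quasiMeasurePreserving.ae ae_Ioc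
  have h0 : piMu (Fin (r+1)) (univ.pi fun i => cell t ht ⁻¹' {Fin.castLE h i}) = 0 := by
    rw [← compl_mem_ae_iff]
    filter_upwards [hK, hI] with x hx hxI hmem
    simp only [mem_univ_pi, mem_preimage, mem_singleton_iff] at hmem
    refine one_ne_zero (α := ℝ) (hx.symm ▸ ?_)
    symm
    refine Finset.prod_eq_one fun i _ => Finset.prod_eq_one fun j _ => ?_
    split_ifs with hij
    · have : Wrs t u (x i) (x j) = 1/2 := by
        rw [Wrs_cell ht u (hxI i) (hxI j), hmem, hmem, wstep, if_pos]
        intro hc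
        exact hij.ne (Fin.castLE_injective h hc)
      unfold randIndicator
      rw [this]
      norm_num
    · rfl
  rw [Measure.pi_pi, Finset.prod_eq_zero_iff] at h0
  obtain ⟨i, _, hi⟩ := h0
  have := mu_cell ht (Fin.castLE h i)
  rw [Measure.real, hi] at this
  have ht' : (0:ℝ) < t := by exact_mod_cast ht
  have h3 : (0:ℝ) < 1 / t := by positivity
  rw [← this] at h3
  simp at h3

/-- part of Theorem 1.6, characterisations (1.9), (1.10) of the colouring
number: if every `W ∈ Q̂` has `K_{r+1}`-free randomness support graphon while some
`W₀ ∈ Q̂` has randomness support graphon that is not `K_r`-free, then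
`sup_{W ∈ Q̂} Ent(W) = 1 - 1/r`, `W^{(r,s)} ∈ Q̂` for some `s ≤ r`, and `W^{(t,u)} ∉ Q̂`
for all `t > r`. -/
theorem stmt17 (Q : GraphClass) (hQ : IsHereditary Q) (hne : (limitSet Q).Nonempty)
    (r : ℕ) (hr : 1 ≤ r)
    (hall : ∀ W ∈ limitSet Q, KFree (r + 1) (randIndicator W))
    (hex : ∃ W₀ ∈ limitSet Q, ¬ KFree r (randIndicator W₀)) :
    sSup (graphonEnt '' limitSet Q) = 1 - 1 / (r : ℝ) ∧
      (∃ s : ℕ, s ≤ r ∧ Wrs r s ∈ limitSet Q) ∧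
      ∀ t u : ℕ, r < t → u ≤ t → Wrs t u ∉ limitSet Q := by
  obtain ⟨W₀, hW₀, hK⟩ := hex
  obtain ⟨s, hs, hrich⟩ := exists_rich_std hQ hW₀ r hK
  have hmem : Wrs r s ∈ limitSet Q := Wrs_mem hr hrich
  refine ⟨?_, ⟨s, hs, hmem⟩, fun t u ht _ hc => Wrs_not_kfree u ht (hall _ hc)⟩
  refine IsGreatest.csSup_eq ⟨⟨_, hmem, ent_Wrs hr s⟩, ?_⟩
  rintro _ ⟨W, hW, rfl⟩
  exact (ent_le hW.1).trans (turan_graphon hW.1 hr (hall W hW))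

end
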